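/- arXiv:1707.08318 — 4 statements merged into one kernel-verified Lean document; each statement's English description precedes it below -/
import Mathlib

section
/- Let b be a connected, canonically compactifiable graph over a finite discrete measure space (X,m), and let h ∈ ℓ²(X,m) with h not identically zero. Then there exists u ∈ D(L) with Lu = h e^u (i.e. Lu(x) = h(x)e^{u(x)} for all x ∈ X) if and only if h̄ < 0 and h changes sign (i.e. h takes both a positive and a negative value). -/
open scoped BigOperators

/-- `u` is square-summable with respect to the measure `m`, i.e. `u ∈ ℓ²(X,m)`. -/
def MemL2 {X : Type*} (m : X → ℝ) (u : X → ℝ) : Prop :=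
  Summable (fun x => u x ^ 2 * m x)

/-- `u` has finite energy: the sum defining `Q̃(u)` converges. -/
def FinEnergy {X : Type*} (b : X → X → ℝ) (u : X → ℝ) : Prop :=
  Summable (fun p : X × X => b p.1 p.2 * (u p.1 - u p.2) ^ 2)

/-- The energy `Q(u) = (1/2) Σ_{x,y} b(x,y) (u(x) - u(y))²`. -/
noncomputable def energy {X : Type*} (b : X → X → ℝ) (u : X → ℝ) : ℝ :=
  (1 / 2) * ∑' p : X × X, b p.1 p.2 * (u p.1 - u p.2) ^ 2

/-- The bilinear energy form `Q(u,v) = (1/2) Σ_{x,y} b(x,y)(u(x)-u(y))(v(x)-v(y))`. -/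
noncomputable def energyBil {X : Type*} (b : X → X → ℝ) (u v : X → ℝ) : ℝ :=
  (1 / 2) * ∑' p : X × X, b p.1 p.2 * (u p.1 - u p.2) * (v p.1 - v p.2)

/-- The form domain `D(Q) = ℓ²(X,m) ∩ D̃`. -/
def MemDQ {X : Type*} (b : X → X → ℝ) (m : X → ℝ) (u : X → ℝ) : Prop :=
  MemL2 m u ∧ FinEnergy b u

/-- The form norm `‖u‖_Q = (Q(u) + ‖u‖₂²)^{1/2}`. -/
noncomputable def formNorm {X : Type*} (b : X → X → ℝ) (m : X → ℝ) (u : X → ℝ) : ℝ :=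
  Real.sqrt (energy b u + ∑' x, u x ^ 2 * m x)

/-- `b` is a graph over `X`: symmetric, nonnegative, zero on the diagonal,
with summable rows. -/
structure IsGraph {X : Type*} (b : X → X → ℝ) : Prop where
  symm : ∀ x y, b x y = b y x
  nonneg : ∀ x y, 0 ≤ b x y
  diag : ∀ x, b x x = 0
  row_summable : ∀ x, Summable (fun y => b x y)

/-- The graph `b` is connected: any two points are joined by a path of edges of
positive weight. -/
def GraphConnected {X : Type*} (b : X → X → ℝ) : Prop :=
  ∀ x y : X, Relation.ReflTransGen (fun a c => 0 < b a c) x y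

/-- `(X,m)` is a finite discrete measure space: `m > 0` everywhere and `m(X) < ∞`. -/
structure FinMeasure {X : Type*} (m : X → ℝ) : Prop where
  pos : ∀ x, 0 < m x
  summable : Summable m

/-- The graph `b` over `(X,m)` is canonically compactifiable: every function in
`D(Q)` is bounded. -/
def CanCompact {X : Type*} (b : X → X → ℝ) (m : X → ℝ) : Prop :=
  ∀ u : X → ℝ, MemDQ b m u → ∃ M : ℝ, ∀ x, |u x| ≤ M

/-- `u ∈ D(L)` with `L u = f` for the Neumann Laplacian `L`:
`u ∈ D(Q)`, `f ∈ ℓ²(X,m)` and `Q(u,v) = ⟨f,v⟩` for all `v ∈ D(Q)`. -/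
def IsLap {X : Type*} (b : X → X → ℝ) (m : X → ℝ) (u f : X → ℝ) : Prop :=
  MemDQ b m u ∧ MemL2 m f ∧
    ∀ v : X → ℝ, MemDQ b m v → energyBil b u v = ∑' x, f x * v x * m x

/-- The mean `ū = ⟨u,1⟩ / m(X)`. -/
noncomputable def mean {X : Type*} (m : X → ℝ) (u : X → ℝ) : ℝ :=
  (∑' x, u x * m x) / (∑' x, m x)

namespace KW

noncomputable def N {X : Type*} (b : X → X → ℝ) (u : X → ℝ) : ℝ :=
  ∑' p : X × X, b p.1 p.2 * (u p.1 - u p.2) ^ 2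

noncomputable def B {X : Type*} (b : X → X → ℝ) (u v : X → ℝ) : ℝ :=
  ∑' p : X × X, b p.1 p.2 * (u p.1 - u p.2) * (v p.1 - v p.2)

section
variable {X : Type*} {b : X → X → ℝ} {m : X → ℝ}

lemma N_nonneg (hb : IsGraph b) (u : X → ℝ) : 0 ≤ N b u :=
  tsum_nonneg fun p => mul_nonneg (hb.nonneg _ _) (sq_nonneg _)

lemma fin_of_le (hb : IsGraph b) {u v : X → ℝ} (K : ℝ) (hu : FinEnergy b u)
    (hK : ∀ x y, |v x - v y| ≤ K * |u x - u y|) : FinEnergy b v := by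
  refine Summable.of_nonneg_of_le (fun p => mul_nonneg (hb.nonneg _ _) (sq_nonneg _))
    (fun p => ?_) (Summable.mul_left (K ^ 2) hu)
  have h1 := hK p.1 p.2
  have h2 : (v p.1 - v p.2) ^ 2 ≤ K ^ 2 * (u p.1 - u p.2) ^ 2 := by
    rw [← sq_abs (v p.1 - v p.2), ← sq_abs (u p.1 - u p.2), ← mul_pow]
    exact pow_le_pow_left₀ (abs_nonneg _) h1 2
  nlinarith [mul_le_mul_of_nonneg_left h2 (hb.nonneg p.1 p.2)]

lemma N_le_of_le (hb : IsGraph b) {u v : X → ℝ} (hu : FinEnergy b u)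
    (hK : ∀ x y, |v x - v y| ≤ |u x - u y|) : N b v ≤ N b u := by
  refine Summable.tsum_le_tsum (fun p => ?_)
    (fin_of_le hb 1 hu (fun x y => by simpa using hK x y)) hu
  have h2 : (v p.1 - v p.2) ^ 2 ≤ (u p.1 - u p.2) ^ 2 := sq_le_sq.2 (hK _ _)
  exact mul_le_mul_of_nonneg_left h2 (hb.nonneg p.1 p.2)

lemma summable_B (hb : IsGraph b) {u v : X → ℝ} (hu : FinEnergy b u) (hv : FinEnergy b v) :
    Summable (fun p : X × X => b p.1 p.2 * (u p.1 - u p.2) * (v p.1 - v p.2)) := by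
  refine Summable.of_norm_bounded (Summable.add hu hv) (fun p => ?_)
  rw [Real.norm_eq_abs, mul_assoc, abs_mul, abs_of_nonneg (hb.nonneg _ _), ← mul_add]
  refine mul_le_mul_of_nonneg_left ?_ (hb.nonneg _ _)
  rw [abs_le]
  constructor <;> nlinarith [sq_nonneg ((u p.1 - u p.2) + (v p.1 - v p.2)),
    sq_nonneg ((u p.1 - u p.2) - (v p.1 - v p.2)), sq_nonneg (u p.1 - u p.2), sq_nonneg (v p.1 - v p.2)]

lemma hasSum_comb (hb : IsGraph b) {u v w : X → ℝ} (hu : FinEnergy b u) (hv : FinEnergy b v)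
    (hw : FinEnergy b w) (t s : ℝ) :
    HasSum (fun p : X × X => b p.1 p.2 * ((u p.1 + t * v p.1 + s * w p.1) -
      (u p.2 + t * v p.2 + s * w p.2)) ^ 2)
      (N b u + t ^ 2 * N b v + s ^ 2 * N b w + 2 * t * B b u v + 2 * s * B b u w
        + 2 * t * s * B b v w) := by
  have h1 : HasSum _ (N b u) := Summable.hasSum hu
  have h2 : HasSum _ (N b v) := Summable.hasSum hv
  have h3 : HasSum _ (N b w) := Summable.hasSum hw
  have h4 : HasSum _ (B b u v) := Summable.hasSum (summable_B hb hu hv)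
  have h5 : HasSum _ (B b u w) := Summable.hasSum (summable_B hb hu hw)
  have h6 : HasSum _ (B b v w) := Summable.hasSum (summable_B hb hv hw)
  refine (((((h1.add (h2.mul_left (t ^ 2))).add (h3.mul_left (s ^ 2))).add
    (h4.mul_left (2 * t))).add (h5.mul_left (2 * s))).add (h6.mul_left (2 * t * s))).congr_fun ?_
  intro p
  ring

lemma fin_single (hb : IsGraph b) [DecidableEq X] (x₀ : X) :
    FinEnergy b (Pi.single x₀ (1 : ℝ) : X → ℝ) := by
  have h1 : Summable (fun p : X × X => if p.1 = x₀ then b p.1 p.2 else 0) := by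
    have hi : Function.Injective (fun y : X => (x₀, y)) := fun y z h => by simpa using h
    rw [← hi.summable_iff]
    · simpa [Function.comp_def] using hb.row_summable x₀
    · intro p hp
      have : p.1 ≠ x₀ := fun h => hp ⟨p.2, by rw [← h]⟩
      simp [this]
  have h2 : Summable (fun p : X × X => if p.2 = x₀ then b p.1 p.2 else 0) := by
    have := (Equiv.prodComm X X).summable_iff.2 h1
    refine this.congr fun p => ?_
    simp [hb.symm p.1 p.2]
  refine Summable.of_nonneg_of_le (fun p => mul_nonneg (hb.nonneg _ _) (sq_nonneg _))
    (fun p => ?_) (h1.add h2)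
  have := hb.nonneg p.1 p.2
  by_cases ha : p.1 = x₀ <;> by_cases hc : p.2 = x₀ <;> simp [ha, hc]
  exact hb.nonneg _ _

lemma path_bound (hb : IsGraph b) {x y : X}
    (h : Relation.ReflTransGen (fun a c => 0 < b a c) x y) :
    ∃ K : ℝ, 0 ≤ K ∧ ∀ v, FinEnergy b v → (v y - v x) ^ 2 ≤ K * N b v := by
  induction h with
  | refl => exact ⟨0, le_rfl, fun v _ => by simp⟩
  | @tail y z _ hyz ih =>
    obtain ⟨K, hK, hk⟩ := ih
    refine ⟨2 * K + 2 / b y z, by positivity, fun v hv => ?_⟩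
    have h1 : b y z * (v y - v z) ^ 2 ≤ N b v :=
      Summable.le_tsum hv (y, z) (fun p _ => mul_nonneg (hb.nonneg _ _) (sq_nonneg _))
    have h2 := hk v hv
    have h3 : (v y - v z) ^ 2 ≤ N b v / b y z := by
      rw [le_div_iff₀ hyz]; linarith
    have : (2 * K + 2 / b y z) * N b v = 2 * (K * N b v) + 2 * (N b v / b y z) := by ring
    rw [this]
    nlinarith [sq_nonneg ((v y - v x) - (v z - v y)), sq_nonneg ((v y - v x) + (v z - v y))]

lemma memL2_of_bdd (hm : FinMeasure m) {u : X → ℝ} {M : ℝ} (hM : ∀ x, |u x| ≤ M) : MemL2 m u := by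
  refine Summable.of_nonneg_of_le (fun x => mul_nonneg (sq_nonneg _) (hm.pos x).le)
    (fun x => ?_) (hm.summable.mul_left (M ^ 2))
  refine mul_le_mul_of_nonneg_right ?_ (hm.pos x).le
  rw [← sq_abs]
  exact pow_le_pow_left₀ (abs_nonneg _) (hM x) 2

lemma memL2_mul_bdd (hm : FinMeasure m) {h g : X → ℝ} (hh : MemL2 m h) {M : ℝ}
    (hM : ∀ x, |g x| ≤ M) : MemL2 m (fun x => h x * g x) := by
  refine Summable.of_nonneg_of_le (fun x => mul_nonneg (sq_nonneg _) (hm.pos x).le)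
    (fun x => ?_) (Summable.mul_left (M ^ 2) hh)
  have : g x ^ 2 ≤ M ^ 2 := by
    rw [← sq_abs]
    exact pow_le_pow_left₀ (abs_nonneg _) (hM x) 2
  have h2 := mul_le_mul_of_nonneg_left this (mul_nonneg (sq_nonneg (h x)) (hm.pos x).le)
  simp only
  nlinarith

lemma summable_abs (hm : FinMeasure m) {h : X → ℝ} (hh : MemL2 m h) :
    Summable (fun x => |h x| * m x) := by
  refine Summable.of_nonneg_of_le (fun x => mul_nonneg (abs_nonneg _) (hm.pos x).le)
    (fun x => ?_) (Summable.add hm.summable hh)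
  have := hm.pos x
  have h2 : |h x| ≤ 1 + h x ^ 2 := by rw [← sq_abs]; nlinarith [sq_nonneg (|h x| - 1)]
  nlinarith

lemma summable_hg (hm : FinMeasure m) {h g : X → ℝ} (hh : MemL2 m h) {M : ℝ}
    (hM : ∀ x, |g x| ≤ M) : Summable (fun x => h x * g x * m x) := by
  refine Summable.of_norm_bounded ((summable_abs hm hh).mul_left M) (fun x => ?_)
  rw [Real.norm_eq_abs, abs_mul, abs_mul, abs_of_pos (hm.pos x)]
  have := mul_le_mul_of_nonneg_left (hM x) (mul_nonneg (abs_nonneg (h x)) (hm.pos x).le)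
  nlinarith

lemma exp_lip {M a c : ℝ} (ha : |a| ≤ M) (hc : |c| ≤ M) :
    |Real.exp a - Real.exp c| ≤ Real.exp M * |a - c| := by
  wlog hac : c ≤ a generalizing a c
  · rw [abs_sub_comm, abs_sub_comm a c]; exact this hc ha (le_of_not_ge hac)
  rw [abs_of_nonneg (sub_nonneg.2 (Real.exp_le_exp.2 hac)), abs_of_nonneg (sub_nonneg.2 hac)]
  have h1 : Real.exp c = Real.exp a * Real.exp (c - a) := by rw [← Real.exp_add]; ring_nf
  have h2 := Real.add_one_le_exp (c - a)
  have h3 : Real.exp a ≤ Real.exp M := Real.exp_le_exp.2 ((le_abs_self a).trans ha)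
  have h4 := Real.exp_pos a
  rw [h1]
  nlinarith [mul_le_mul_of_nonneg_left h2 h4.le, mul_le_mul_of_nonneg_right h3 (sub_nonneg.2 hac)]

lemma exp_bdd {u : X → ℝ} {M : ℝ} (hM : ∀ x, |u x| ≤ M) (x : X) :
    |Real.exp (u x)| ≤ Real.exp M := by
  rw [abs_of_pos (Real.exp_pos _)]
  exact Real.exp_le_exp.2 ((le_abs_self _).trans (hM x))

lemma exp_neg_mem (hb : IsGraph b) (hm : FinMeasure m) {u : X → ℝ} (hu : FinEnergy b u) {M : ℝ}
    (hM : ∀ x, |u x| ≤ M) : MemDQ b m (fun x => Real.exp (- u x)) := by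
  have hM' : ∀ x, |(fun x => - u x) x| ≤ M := fun x => by simpa using hM x
  refine ⟨memL2_of_bdd hm (exp_bdd hM'), fin_of_le hb (Real.exp M) hu fun x y => ?_⟩
  have := exp_lip (hM' x) (hM' y)
  simp only at this ⊢
  rwa [show - u x - - u y = -(u x - u y) by ring, abs_neg] at this

lemma term_neg (a c : ℝ) : (a - c) * (Real.exp (-a) - Real.exp (-c)) ≤ 0 := by
  rcases le_total a c with h | h
  · exact mul_nonpos_of_nonpos_of_nonneg (by linarith) (sub_nonneg.2 (Real.exp_le_exp.2 (by linarith)))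
  · exact mul_nonpos_of_nonneg_of_nonpos (by linarith) (sub_nonpos.2 (Real.exp_le_exp.2 (by linarith)))

lemma B_exp_neg (hb : IsGraph b) (hconn : GraphConnected b) (hm : FinMeasure m) {u : X → ℝ}
    (hu : FinEnergy b u) {M : ℝ} (hM : ∀ x, |u x| ≤ M)
    (h0 : 0 ≤ B b u (fun x => Real.exp (- u x))) : ∀ x y, u x = u y := by
  have hs := summable_B hb hu (exp_neg_mem hb hm hu hM).2
  have hle : ∀ p : X × X, 0 ≤ -(b p.1 p.2 * (u p.1 - u p.2) *
      (Real.exp (- u p.1) - Real.exp (- u p.2))) := fun p => by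
    have := mul_nonneg (hb.nonneg p.1 p.2) (neg_nonneg.2 (term_neg (u p.1) (u p.2)))
    linarith
  have hz : B b u (fun x => Real.exp (- u x)) = 0 := by
    refine le_antisymm ?_ h0
    exact tsum_nonpos fun p => neg_nonneg.1 (hle p)
  have h2 := hs.hasSum.neg
  have h3 : -(∑' p : X × X, b p.1 p.2 * (u p.1 - u p.2) *
      (Real.exp (- u p.1) - Real.exp (- u p.2))) = 0 := by
    rw [neg_eq_zero]; exact hz
  rw [h3] at h2
  rw [hasSum_zero_iff_of_nonneg hle] at h2
  intro x y
  induction hconn x y with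
  | refl => rfl
  | @tail y z _ hyz ih =>
    rw [ih]
    have := congrFun h2 (y, z)
    simp only [Pi.zero_apply, neg_eq_zero, mul_eq_zero] at this
    rcases this with (h | h) | h
    · exact absurd h hyz.ne'
    · linarith
    · have := Real.exp_injective (sub_eq_zero.1 h)
      linarith

lemma const_mem (hm : FinMeasure m) (c : ℝ) : MemDQ b m (fun _ => c) :=
  ⟨memL2_of_bdd hm (M := |c|) fun _ => le_rfl, by simp [FinEnergy, summable_zero]⟩

end

end KW

namespace KW

lemma sup_sq {f g : ℕ → ℝ} (hf : BddAbove (Set.range f)) (hg : BddAbove (Set.range g))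
    (hs : Summable fun n => (f n - g n) ^ 2) :
    ((⨆ n, f n) - ⨆ n, g n) ^ 2 ≤ ∑' n, (f n - g n) ^ 2 := by
  have hR : ∀ n, |f n - g n| ≤ √(∑' n, (f n - g n) ^ 2) := fun n =>
    Real.abs_le_sqrt (hs.le_tsum n fun _ _ => sq_nonneg _)
  have h0 : 0 ≤ ∑' n, (f n - g n) ^ 2 := tsum_nonneg fun _ => sq_nonneg _
  have h1 : (⨆ n, f n) ≤ (⨆ n, g n) + √(∑' n, (f n - g n) ^ 2) := ciSup_le fun n => by
    have := le_ciSup hg n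
    have := (abs_le.1 (hR n)).2
    linarith
  have h2 : (⨆ n, g n) ≤ (⨆ n, f n) + √(∑' n, (f n - g n) ^ 2) := ciSup_le fun n => by
    have := le_ciSup hf n
    have := (abs_le.1 (hR n)).1
    linarith
  rw [← Real.sqrt_le_sqrt_iff h0, Real.sqrt_sq_eq_abs, abs_le]
  constructor <;> linarith

lemma summable_of_double {ι : Type*} {F : ℕ → ι → ℝ} {a : ℕ → ℝ} {G : ι → ℝ}
    (hF : ∀ n i, 0 ≤ F n i) (hFs : ∀ n, Summable (F n)) (hFa : ∀ n, ∑' i, F n i ≤ a n)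
    (ha : Summable a) (hG : ∀ i, 0 ≤ G i) (hGF : ∀ i, G i ≤ ∑' n, F n i) : Summable G := by
  have hsn : ∀ i, Summable fun n => F n i := fun i =>
    Summable.of_nonneg_of_le (fun n => hF n i)
      (fun n => ((hFs n).le_tsum i fun j _ => hF n j).trans (hFa n)) ha
  refine summable_of_sum_le (c := ∑' n, a n) hG fun S => ?_
  calc ∑ i ∈ S, G i ≤ ∑ i ∈ S, ∑' n, F n i := Finset.sum_le_sum fun i _ => hGF i
    _ = ∑' n, ∑ i ∈ S, F n i := (Summable.tsum_finsetSum fun i _ => hsn i).symm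
    _ ≤ ∑' n, a n := by
      refine Summable.tsum_le_tsum (fun n => ?_) (summable_sum fun i _ => hsn i) ha
      exact ((hFs n).sum_le_tsum S fun j _ => hF n j).trans (hFa n)

section
variable {X : Type*} {b : X → X → ℝ} {m : X → ℝ}

open Filter Topology

lemma small (hb : IsGraph b) (hconn : GraphConnected b) (hm : FinMeasure m)
    (hcc : CanCompact b m) (x₀ : X) :
    ∃ ε > 0, ∀ w : X → ℝ, FinEnergy b w → (∀ x, 0 ≤ w x) → (∀ x, w x ≤ 1) → w x₀ = 0 →
      N b w < ε → ∀ x, w x < 1 := by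
  by_contra! hcon
  have hk : ∀ k : ℕ, (0 : ℝ) < 1 / ((k : ℝ) + 1) := fun k => by positivity
  choose w hwE hw0 hw1 hwx hwN y hy using fun k : ℕ => hcon _ (hk k)
  have hlim : Tendsto (fun k : ℕ => 1 / ((k : ℝ) + 1)) atTop (𝓝 0) :=
    tendsto_one_div_add_atTop_nhds_zero_nat
  have hN : Tendsto (fun k => N b (w k)) atTop (𝓝 0) :=
    squeeze_zero (fun k => N_nonneg hb _) (fun k => (hwN k).le) hlim
  have hpt : ∀ x, Tendsto (fun k => w k x ^ 2 * m x) atTop (𝓝 0) := by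
    intro x
    obtain ⟨K, hK, hKx⟩ := path_bound hb (hconn x₀ x)
    have h1 : Tendsto (fun k => w k x ^ 2) atTop (𝓝 0) := by
      refine squeeze_zero (fun k => sq_nonneg _) (fun k => ?_) (by simpa using hN.const_mul K)
      simpa [hwx] using hKx (w k) (hwE k)
    simpa using h1.mul_const (m x)
  have hL2 : ∀ k, MemL2 m (w k) := fun k =>
    memL2_of_bdd hm (M := 1) fun x => by rw [abs_of_nonneg (hw0 k x)]; exact hw1 k x
  have hS : Tendsto (fun k => ∑' x, w k x ^ 2 * m x) atTop (𝓝 0) := by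
    have := tendsto_tsum_of_dominated_convergence (𝓕 := atTop) (f := fun k x => w k x ^ 2 * m x)
      (g := fun _ => (0 : ℝ)) (bound := m) hm.summable hpt (Eventually.of_forall fun k x => by
        have := (hm.pos x).le
        rw [Real.norm_of_nonneg (by positivity)]
        have h1 : w k x ^ 2 ≤ 1 := pow_le_one₀ (hw0 k x) (hw1 k x)
        nlinarith)
    simpa using this
  have hex : ∀ n : ℕ, ∃ k, N b (w k) + ∑' x, w k x ^ 2 * m x < (1 / 2) ^ n / ((n : ℝ) + 1) ^ 2 := by
    intro n
    have h1 := hN.add hS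
    rw [add_zero] at h1
    exact (h1.eventually_lt_const (by positivity)).exists
  choose k hk using hex
  have hkN : ∀ n : ℕ, ((n : ℝ) + 1) ^ 2 * N b (w (k n)) ≤ (1 / 2) ^ n := fun n => by
    have h1 := (lt_div_iff₀ (by positivity)).1 (hk n)
    have h2 : 0 ≤ ∑' x, w (k n) x ^ 2 * m x :=
      tsum_nonneg fun x => mul_nonneg (sq_nonneg _) (hm.pos x).le
    have h3 : 0 ≤ ((n : ℝ) + 1) ^ 2 := by positivity
    nlinarith
  have hkS : ∀ n : ℕ, ((n : ℝ) + 1) ^ 2 * ∑' x, w (k n) x ^ 2 * m x ≤ (1 / 2) ^ n := fun n => by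
    have h1 := (lt_div_iff₀ (by positivity)).1 (hk n)
    have h2 := N_nonneg hb (w (k n))
    have h3 : 0 ≤ ((n : ℝ) + 1) ^ 2 := by positivity
    nlinarith
  have hgeo : Summable fun n : ℕ => (1 / 2 : ℝ) ^ n := summable_geometric_two
  set g : ℕ → X → ℝ := fun n x => ((n : ℝ) + 1) * w (k n) x with hg
  have hg0 : ∀ n x, 0 ≤ g n x := fun n x => mul_nonneg (by positivity) (hw0 _ _)
  have hgL : ∀ n, Summable fun x => g n x ^ 2 * m x := fun n => by
    refine (Summable.mul_left (((n : ℝ) + 1) ^ 2) (hL2 (k n))).congr fun x => ?_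
    simp only [hg]; ring
  have hgLs : ∀ n, ∑' x, g n x ^ 2 * m x ≤ (1 / 2) ^ n := fun n => by
    refine le_trans (le_of_eq ?_) (hkS n)
    rw [← tsum_mul_left]
    refine tsum_congr fun x => ?_
    simp only [hg]; ring
  have hgE : ∀ n, FinEnergy b (g n) := fun n => by
    refine (Summable.mul_left (((n : ℝ) + 1) ^ 2) (hwE (k n))).congr fun x => ?_
    simp only [hg]; ring
  have hgEs : ∀ n, ∑' p : X × X, b p.1 p.2 * (g n p.1 - g n p.2) ^ 2 ≤ (1 / 2) ^ n := fun n => by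
    refine le_trans (le_of_eq ?_) (hkN n)
    rw [N, ← tsum_mul_left]
    refine tsum_congr fun x => ?_
    simp only [hg]; ring
  have hgx : ∀ n x, g n x ^ 2 ≤ (1 / 2) ^ n / m x := fun n x => by
    rw [le_div_iff₀ (hm.pos x)]
    exact ((hgL n).le_tsum x fun j _ => mul_nonneg (sq_nonneg _) (hm.pos j).le).trans (hgLs n)
  have hgxs : ∀ x, Summable fun n => g n x ^ 2 := fun x =>
    Summable.of_nonneg_of_le (fun n => sq_nonneg _) (fun n => hgx n x) (hgeo.div_const (m x))
  have hbdd : ∀ x, BddAbove (Set.range fun n => g n x) := fun x => by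
    refine ⟨√(∑' n, g n x ^ 2), ?_⟩
    rintro _ ⟨n, rfl⟩
    exact Real.le_sqrt_of_sq_le ((hgxs x).le_tsum n fun _ _ => sq_nonneg _)
  have hdiff : ∀ x z, Summable fun n => (g n x - g n z) ^ 2 := fun x z =>
    Summable.of_nonneg_of_le (fun n => sq_nonneg _) (fun n => by
      nlinarith [sq_nonneg (g n x + g n z)]) (((hgxs x).mul_left 2).add ((hgxs z).mul_left 2))
  obtain ⟨M, hM⟩ := hcc (fun x => ⨆ n, g n x) ⟨by
    refine summable_of_double (F := fun n x => g n x ^ 2 * m x)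
      (fun n x => mul_nonneg (sq_nonneg _) (hm.pos x).le) hgL hgLs hgeo
      (fun x => mul_nonneg (sq_nonneg _) (hm.pos x).le) (fun x => ?_)
    rw [tsum_mul_right]
    refine mul_le_mul_of_nonneg_right ?_ (hm.pos x).le
    have := sup_sq (f := fun n => g n x) (g := fun _ => 0) (hbdd x)
      (by simp) (by simpa using hgxs x)
    simpa using this, by
    refine summable_of_double (F := fun n (p : X × X) => b p.1 p.2 * (g n p.1 - g n p.2) ^ 2)
      (fun n x => mul_nonneg (hb.nonneg _ _) (sq_nonneg _)) hgE hgEs hgeo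
      (fun x => mul_nonneg (hb.nonneg _ _) (sq_nonneg _)) (fun p => ?_)
    rw [tsum_mul_left]
    exact mul_le_mul_of_nonneg_left (sup_sq (hbdd _) (hbdd _) (hdiff _ _)) (hb.nonneg _ _)⟩
  obtain ⟨n, hn⟩ := exists_nat_gt M
  have h1 := (abs_le.1 (hM (y (k n)))).2
  have h2 := le_ciSup (hbdd (y (k n))) n
  have h3 := hy (k n)
  simp only [hg] at h1 h2
  nlinarith

lemma unif_bound (hb : IsGraph b) (hconn : GraphConnected b) (hm : FinMeasure m)
    (hcc : CanCompact b m) (x₀ : X) (E : ℝ) :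
    ∃ C : ℝ, ∀ v : X → ℝ, FinEnergy b v → v x₀ = 0 → N b v ≤ E → ∀ x, |v x| ≤ C := by
  obtain ⟨ε, hε, hs⟩ := small hb hconn hm hcc x₀
  set q : ℝ := ε / (2 * (|E| + 1)) with hq
  have hqpos : 0 < q := by positivity
  set r : ℝ := √q
  have hr : 0 < r := Real.sqrt_pos.2 hqpos
  refine ⟨1 / r, fun v hv hv0 hvE x => ?_⟩
  have hlip : ∀ x y, |min (r * |v x|) 1 - min (r * |v y|) 1| ≤ |r * v x - r * v y| := by
    intro x y
    have h1 := abs_min_sub_min_le_max (r * |v x|) 1 (r * |v y|) 1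
    refine h1.trans ?_
    simp only [sub_self, abs_zero]
    refine max_le ?_ (abs_nonneg _)
    rw [← mul_sub, ← mul_sub, abs_mul, abs_mul]
    exact mul_le_mul_of_nonneg_left (abs_abs_sub_abs_le _ _) (abs_nonneg _)
  have hrv : FinEnergy b (fun x => r * v x) :=
    fin_of_le hb r hv fun x y => by rw [← mul_sub, abs_mul, abs_of_pos hr]
  have hrN : N b (fun x => r * v x) = q * N b v := by
    rw [N, N, ← tsum_mul_left]
    refine tsum_congr fun p => ?_
    rw [← mul_sub, mul_pow, Real.sq_sqrt hqpos.le]; ring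
  have hlt : q * N b v < ε := by
    have h1 : N b v ≤ |E| := hvE.trans (le_abs_self E)
    have h2 : q * (2 * (|E| + 1)) = ε := by rw [hq]; field_simp
    nlinarith [abs_nonneg E]
  have := hs (fun x => min (r * |v x|) 1)
    (fin_of_le hb 1 hrv fun x y => by simpa using hlip x y)
    (fun x => le_min (by positivity) zero_le_one) (fun x => min_le_right _ _)
    (by simp [hv0]) (lt_of_le_of_lt (N_le_of_le hb hrv hlip) (hrN ▸ hlt)) x
  simp only [min_lt_iff, lt_irrefl, or_false] at this
  rw [le_div_iff₀ hr]; linarith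

/-- existence of a minimizer -/
lemma exists_min [Countable X] (hb : IsGraph b) (hconn : GraphConnected b) (hm : FinMeasure m)
    (hcc : CanCompact b m) {h : X → ℝ} (hh : MemL2 m h)
    (hex : ∃ w : X → ℝ, FinEnergy b w ∧ (∃ M, ∀ x, |w x| ≤ M) ∧
      ∑' x, h x * Real.exp (w x) * m x = 0) (x₀ : X) :
    ∃ u : X → ℝ, FinEnergy b u ∧ (∃ M, ∀ x, |u x| ≤ M) ∧
      ∑' x, h x * Real.exp (u x) * m x = 0 ∧
      ∀ w : X → ℝ, FinEnergy b w → (∃ M, ∀ x, |w x| ≤ M) →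
        ∑' x, h x * Real.exp (w x) * m x = 0 → N b u ≤ N b w := by
  set A : Set ℝ := {r | ∃ w : X → ℝ, FinEnergy b w ∧ (∃ M, ∀ x, |w x| ≤ M) ∧
      ∑' x, h x * Real.exp (w x) * m x = 0 ∧ N b w = r} with hA
  have hAne : A.Nonempty := by
    obtain ⟨w, h1, h2, h3⟩ := hex
    exact ⟨_, w, h1, h2, h3, rfl⟩
  have hAb : BddBelow A := ⟨0, by
    rintro _ ⟨w, _, _, _, rfl⟩
    exact N_nonneg hb w⟩
  set I := sInf A
  have hseq : ∀ n : ℕ, ∃ w : X → ℝ, FinEnergy b w ∧ w x₀ = 0 ∧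
      ∑' x, h x * Real.exp (w x) * m x = 0 ∧ N b w ≤ I + 1 / ((n : ℝ) + 1) := by
    intro n
    obtain ⟨r, ⟨w, h1, h2, h3, rfl⟩, hr⟩ := exists_lt_of_csInf_lt hAne
      (show I < I + 1 / ((n : ℝ) + 1) by have : 0 < 1 / ((n : ℝ) + 1) := by positivity
                                         linarith)
    refine ⟨fun x => w x - w x₀, by simpa [FinEnergy] using h1, by simp, ?_, ?_⟩
    · rw [← zero_mul (Real.exp (-w x₀)), ← h3, ← tsum_mul_right]
      refine tsum_congr fun x => ?_
      simp only
      rw [sub_eq_add_neg, Real.exp_add]; ring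
    · have : N b (fun x => w x - w x₀) = N b w := by simp [N]
      rw [this]; exact hr.le
  choose w hwE hw0 hwc hwN using hseq
  obtain ⟨C, hC⟩ := unif_bound hb hconn hm hcc x₀ (I + 1)
  have hwC : ∀ n x, |w n x| ≤ C := fun n => hC (w n) (hwE n) (hw0 n) ((hwN n).trans (by
    have : 1 / ((n : ℝ) + 1) ≤ 1 := by
      rw [div_le_one (by positivity)]; linarith [Nat.cast_nonneg (α := ℝ) n]
    linarith))
  have hcomp : IsCompact (Set.univ.pi fun _ : X => Set.Icc (-C) C) :=
    isCompact_univ_pi fun _ => isCompact_Icc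
  obtain ⟨u, hu, φ, hφ, hlim⟩ := hcomp.tendsto_subseq (x := w)
    (fun n => fun x _ => abs_le.1 (hwC n x))
  have huC : ∀ x, |u x| ≤ C := fun x => abs_le.2 (hu x (Set.mem_univ x))
  have hpt : ∀ x, Tendsto (fun n => w (φ n) x) atTop (𝓝 (u x)) := fun x =>
    (tendsto_pi_nhds.1 hlim) x
  have hfin : ∀ S : Finset (X × X), ∑ p ∈ S, b p.1 p.2 * (u p.1 - u p.2) ^ 2 ≤ I := by
    intro S
    have h1 : Tendsto (fun n => ∑ p ∈ S, b p.1 p.2 * (w (φ n) p.1 - w (φ n) p.2) ^ 2) atTop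
        (𝓝 (∑ p ∈ S, b p.1 p.2 * (u p.1 - u p.2) ^ 2)) :=
      tendsto_finsetSum _ fun p _ => (((hpt p.1).sub (hpt p.2)).pow 2).const_mul _
    have h2 : Tendsto (fun n => I + 1 / (((φ n : ℕ) : ℝ) + 1)) atTop (𝓝 (I + 0)) :=
      (tendsto_one_div_add_atTop_nhds_zero_nat.comp hφ.tendsto_atTop).const_add I
    rw [add_zero] at h2
    refine le_of_tendsto_of_tendsto' h1 h2 fun n => le_trans ?_ (hwN (φ n))
    exact Summable.sum_le_tsum S (fun p _ => mul_nonneg (hb.nonneg _ _) (sq_nonneg _)) (hwE (φ n))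
  have huE : FinEnergy b u :=
    summable_of_sum_le (fun p => mul_nonneg (hb.nonneg _ _) (sq_nonneg _)) hfin
  refine ⟨u, huE, ⟨C, huC⟩, ?_, fun v hv1 hv2 hv3 => ?_⟩
  · have h1 := tendsto_tsum_of_dominated_convergence (𝓕 := atTop)
      (f := fun n x => h x * Real.exp (w (φ n) x) * m x)
      (g := fun x => h x * Real.exp (u x) * m x) (bound := fun x => Real.exp C * (|h x| * m x))
      ((summable_abs hm hh).mul_left _)
      (fun x => ((((Real.continuous_exp.tendsto _).comp (hpt x)).const_mul _).mul_const _))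
      (Eventually.of_forall fun n x => by
        rw [Real.norm_eq_abs, abs_mul, abs_mul, abs_of_pos (hm.pos x)]
        have := mul_le_mul_of_nonneg_left (exp_bdd (hwC (φ n)) x)
          (mul_nonneg (abs_nonneg (h x)) (hm.pos x).le)
        nlinarith)
    simp only [hwc] at h1
    exact tendsto_nhds_unique h1 tendsto_const_nhds
  · have h1 : N b u ≤ I := huE.tsum_le_of_sum_le hfin
    exact h1.trans (csInf_le hAb ⟨v, hv1, hv2, hv3, rfl⟩)

end

end KW

namespace KW

section
variable {X : Type*} {b : X → X → ℝ} {m : X → ℝ}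

open Filter Topology

lemma deriv_A (hm : FinMeasure m) {h u v : X → ℝ} (hh : MemL2 m h) {C M : ℝ}
    (hu : ∀ x, |u x| ≤ C) (hv : ∀ x, |v x| ≤ M) :
    HasDerivAt (fun t : ℝ => ∑' x, h x * Real.exp (u x + t * v x) * m x)
      (∑' x, h x * (Real.exp (u x) * v x) * m x) 0 := by
  have hM : ∀ x, |v x| ≤ |M| := fun x => (hv x).trans (le_abs_self M)
  have hsA : ∀ t : ℝ, Summable fun x => h x * Real.exp (u x + t * v x) * m x := fun t =>
    summable_hg hm hh (exp_bdd (u := fun x => u x + t * v x) (M := C + |t| * |M|) fun x => by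
      refine (abs_add_le _ _).trans (add_le_add (hu x) ?_)
      rw [abs_mul]
      exact mul_le_mul_of_nonneg_left (hM x) (abs_nonneg _))
  have hsD : Summable fun x => h x * (Real.exp (u x) * v x) * m x :=
    summable_hg hm hh (M := Real.exp C * |M|) fun x => by
      rw [abs_mul]
      exact mul_le_mul (exp_bdd hu x) (hM x) (abs_nonneg _) (Real.exp_pos _).le
  rw [hasDerivAt_iff_isLittleO_nhds_zero]
  refine Asymptotics.IsBigO.trans_isLittleO (g := fun t : ℝ => t ^ 2) ?_
    (Asymptotics.isLittleO_pow_id one_lt_two)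
  refine Asymptotics.IsBigO.of_bound (Real.exp C * |M| ^ 2 * ∑' x, |h x| * m x) ?_
  have hev : ∀ᶠ t : ℝ in 𝓝 0, |t| * |M| < 1 := by
    have : Tendsto (fun t : ℝ => |t| * |M|) (𝓝 0) (𝓝 (|0| * |M|)) :=
      (continuous_abs.mul continuous_const).tendsto 0
    rw [abs_zero, zero_mul] at this
    exact this.eventually_lt_const one_pos
  filter_upwards [hev] with t ht
  have h0 := hsA 0
  simp only [zero_add, smul_eq_mul]
  rw [← tsum_mul_left, ← (hsA t).tsum_sub h0, ← ((hsA t).sub h0).tsum_sub (hsD.mul_left t),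
    ← tsum_mul_left, ← tsum_mul_right]
  refine tsum_of_norm_bounded (((summable_abs hm hh).mul_left _).mul_right _).hasSum fun x => ?_
  have h1 : |t * v x| ≤ |t| * |M| := by
    rw [abs_mul]; exact mul_le_mul_of_nonneg_left (hM x) (abs_nonneg _)
  have h2 := Real.abs_exp_sub_one_sub_id_le (h1.trans ht.le)
  have h3 : (t * v x) ^ 2 ≤ t ^ 2 * |M| ^ 2 := by
    rw [← sq_abs (t * v x), ← sq_abs t, ← mul_pow]
    exact pow_le_pow_left₀ (abs_nonneg _) h1 2
  have h4 : h x * Real.exp (u x + t * v x) * m x - h x * Real.exp (u x + 0 * v x) * m x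
      - t * (h x * (Real.exp (u x) * v x) * m x)
      = (h x * m x) * (Real.exp (u x) * (Real.exp (t * v x) - 1 - t * v x)) := by
    rw [Real.exp_add, zero_mul, add_zero]; ring
  rw [h4, Real.norm_eq_abs, Real.norm_eq_abs, abs_mul, abs_mul, abs_mul, abs_of_pos (hm.pos x),
    abs_of_nonneg (sq_nonneg t)]
  have h5 : |Real.exp (u x)| * |Real.exp (t * v x) - 1 - t * v x| ≤
      Real.exp C * (t ^ 2 * |M| ^ 2) :=
    mul_le_mul (exp_bdd hu x) (h2.trans h3) (abs_nonneg _) (Real.exp_pos _).le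
  have h6 := mul_le_mul_of_nonneg_left h5 (mul_nonneg (abs_nonneg (h x)) (hm.pos x).le)
  linarith

lemma euler (hb : IsGraph b) (hm : FinMeasure m) {h u : X → ℝ} (hh : MemL2 m h)
    (huE : FinEnergy b u) {C : ℝ} (hu : ∀ x, |u x| ≤ C)
    (hc : ∑' x, h x * Real.exp (u x) * m x = 0)
    (hmin : ∀ w : X → ℝ, FinEnergy b w → (∃ M, ∀ x, |w x| ≤ M) →
        ∑' x, h x * Real.exp (w x) * m x = 0 → N b u ≤ N b w)
    {x₁ : X} (hx₁ : h x₁ ≠ 0) :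
    ∃ l : ℝ, ∀ v, FinEnergy b v → (∃ M, ∀ x, |v x| ≤ M) →
      B b u v = l * ∑' x, h x * (Real.exp (u x) * v x) * m x := by
  classical
  set w : X → ℝ := Pi.single x₁ 1 with hw
  have hwE : FinEnergy b w := fin_single hb x₁
  set c : ℝ := h x₁ * Real.exp (u x₁) * m x₁ with hcdef
  have hc0 : c ≠ 0 := mul_ne_zero (mul_ne_zero hx₁ (Real.exp_pos _).ne') (hm.pos _).ne'
  refine ⟨B b u w / c, fun v hvE ⟨M, hv⟩ => ?_⟩
  set A : ℝ → ℝ := fun t => ∑' x, h x * Real.exp (u x + t * v x) * m x with hA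
  set D : ℝ := ∑' x, h x * (Real.exp (u x) * v x) * m x with hD
  have hAd : HasDerivAt A D 0 := deriv_A hm hh hu hv
  have hA0 : A 0 = 0 := by simpa [hA] using hc
  set G : ℝ → ℝ := fun t => 1 - A t * Real.exp (- (t * v x₁)) / c with hG
  have hG0 : G 0 = 1 := by simp [hG, hA0]
  have hGd : HasDerivAt G (-(D / c)) 0 := by
    have h1 : HasDerivAt (fun t : ℝ => Real.exp (- (t * v x₁)))
        (Real.exp (-(0 * v x₁)) * (-(1 * v x₁))) 0 :=
      (((hasDerivAt_id (0 : ℝ)).mul_const (v x₁)).neg).exp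
    have h2 := ((hAd.mul h1).div_const c).const_sub 1
    refine h2.congr_deriv ?_
    simp [hA0]
  set s : ℝ → ℝ := fun t => Real.log (G t) with hs
  have hs0 : s 0 = 0 := by simp [hs, hG0]
  have hsd : HasDerivAt s (-(D / c)) 0 := by
    have := hGd.log (by rw [hG0]; exact one_ne_zero)
    rwa [hG0, div_one] at this
  set F : ℝ → ℝ := fun t => N b u + t ^ 2 * N b v + s t ^ 2 * N b w + 2 * t * B b u v
    + 2 * s t * B b u w + 2 * t * s t * B b v w with hF
  have hFd : HasDerivAt F (2 * B b u v + 2 * (-(D / c)) * B b u w) 0 := by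
    have ht := hasDerivAt_id' (0 : ℝ)
    have := ((((((ht.pow 2).mul_const (N b v)).const_add (N b u)).add
      ((hsd.pow 2).mul_const (N b w))).add
      ((ht.const_mul 2).mul_const (B b u v))).add ((hsd.const_mul 2).mul_const (B b u w))).add
      (((ht.const_mul 2).mul hsd).mul_const (B b v w))
    refine this.congr_deriv ?_
    simp [hs0]
  have hGpos : ∀ᶠ t in 𝓝 (0 : ℝ), 0 < G t :=
    hGd.continuousAt.eventually (lt_mem_nhds (by rw [hG0]; exact one_pos))
  have hloc : IsLocalMin F 0 := by
    filter_upwards [hGpos] with t ht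
    have hF0 : F 0 = N b u := by simp [hF, hs0]
    have hsum := hasSum_comb hb huE hvE hwE t (s t)
    rw [hF0]
    have hN : N b (fun x => u x + t * v x + s t * w x) = F t := hsum.tsum_eq
    rw [← hN]
    refine hmin _ hsum.summable ⟨C + |t| * |M| + |s t|, fun x => ?_⟩ ?_
    · refine (abs_add_le _ _).trans (add_le_add ((abs_add_le _ _).trans (add_le_add (hu x) ?_)) ?_)
      · rw [abs_mul]
        exact mul_le_mul_of_nonneg_left ((hv x).trans (le_abs_self M)) (abs_nonneg _)
      · rw [abs_mul]
        refine mul_le_of_le_one_right (abs_nonneg _) ?_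
        by_cases hx : x = x₁ <;> simp [hw, hx]
    · have hsA : Summable fun x => h x * Real.exp (u x + t * v x) * m x :=
        summable_hg hm hh (exp_bdd (u := fun x => u x + t * v x) (M := C + |t| * |M|) fun x => by
          refine (abs_add_le _ _).trans (add_le_add (hu x) ?_)
          rw [abs_mul]
          exact mul_le_mul_of_nonneg_left ((hv x).trans (le_abs_self M)) (abs_nonneg _))
      have h1 : HasSum (fun x => (Pi.single x₁ (c * Real.exp (t * v x₁) * (G t - 1)) : X → ℝ) x)
          (c * Real.exp (t * v x₁) * (G t - 1)) := hasSum_pi_single _ _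
      have h2 := hsA.hasSum.add h1
      have h3 : c * Real.exp (t * v x₁) * (G t - 1) = - A t := by
        simp only [hG, Real.exp_neg]
        have := (Real.exp_pos (t * v x₁)).ne'
        field_simp
        ring
      have h4 : (∑' x, h x * Real.exp (u x + t * v x) * m x)
          + c * Real.exp (t * v x₁) * (G t - 1) = 0 := by
        rw [h3]; exact add_neg_cancel _
      rw [h4] at h2
      rw [← h2.tsum_eq]
      refine tsum_congr fun x => ?_
      by_cases hx : x = x₁
      · subst hx
        simp only [hw, Pi.single_eq_same, mul_one, hs, Real.exp_add, Real.exp_log ht, hcdef]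
        ring
      · simp [hw, hx]
  have := hloc.hasDerivAt_eq_zero hFd
  have h5 : B b u v = D / c * B b u w := by linarith
  rw [h5]; ring

end

end KW

/-- the Kazdan-Warner equation `Lu = h e^u` has a solution iff
`h̄ < 0` and `h` changes sign. -/
theorem stmt6 {X : Type*} [Countable X] (b : X → X → ℝ) (m : X → ℝ)
    (hb : IsGraph b) (hconn : GraphConnected b) (hm : FinMeasure m)
    (hcc : CanCompact b m) (h : X → ℝ) (hh2 : MemL2 m h) (hne : h ≠ 0) :
    (∃ u : X → ℝ, IsLap b m u (fun x => h x * Real.exp (u x))) ↔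
      (mean m h < 0 ∧ (∃ x, 0 < h x) ∧ (∃ x, h x < 0)) := by
  have hmX : 0 < ∑' x, m x := by
    obtain ⟨x, _⟩ := Function.ne_iff.1 hne
    exact (hm.pos x).trans_le (hm.summable.le_tsum x fun y _ => (hm.pos y).le)
  constructor
  · rintro ⟨u, ⟨hu2, huE⟩, hf2, hweak⟩
    obtain ⟨M, hM⟩ := hcc u ⟨hu2, huE⟩
    have hs := KW.summable_hg hm hh2 (KW.exp_bdd hM)
    -- test with the constant one
    have h0 : ∑' x, h x * Real.exp (u x) * m x = 0 := by
      have := hweak (fun _ => 1) (KW.const_mem hm 1)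
      simpa [energyBil] using this.symm
    have hexp : ∀ x, 0 < Real.exp (u x) * m x := fun x => mul_pos (Real.exp_pos _) (hm.pos x)
    have hzero : ∀ x, h x * Real.exp (u x) * m x = 0 → h x = 0 := fun x hx => by
      rw [mul_assoc] at hx
      exact (mul_eq_zero.1 hx).resolve_right (hexp x).ne'
    have hpos : ∃ x, 0 < h x := by
      by_contra! hcon
      apply hne
      have h1 : HasSum (fun x => -(h x * Real.exp (u x) * m x)) 0 := by
        have := hs.hasSum.neg
        rwa [h0, neg_zero] at this
      rw [hasSum_zero_iff_of_nonneg] at h1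
      · funext x
        exact hzero x (neg_eq_zero.1 (congrFun h1 x))
      · intro x
        have := mul_nonneg (neg_nonneg.2 (hcon x)) (hexp x).le
        linarith
    have hneg : ∃ x, h x < 0 := by
      by_contra! hcon
      apply hne
      have h1 : HasSum (fun x => h x * Real.exp (u x) * m x) 0 := by
        have := hs.hasSum
        rwa [h0] at this
      rw [hasSum_zero_iff_of_nonneg] at h1
      · funext x
        exact hzero x (congrFun h1 x)
      · intro x
        have := mul_nonneg (hcon x) (hexp x).le
        linarith
    refine ⟨?_, hpos, hneg⟩
    have h1 := hweak _ (KW.exp_neg_mem hb hm huE hM)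
    have h2 : ∑' x, h x * Real.exp (u x) * Real.exp (- u x) * m x = ∑' x, h x * m x := by
      refine tsum_congr fun x => ?_
      rw [mul_assoc (h x), ← Real.exp_add]; simp
    rw [h2] at h1
    refine div_neg_of_neg_of_pos ?_ hmX
    by_contra! hcon
    have hB : 0 ≤ KW.B b u (fun x => Real.exp (- u x)) := by
      have : energyBil b u (fun x => Real.exp (- u x)) =
        (1 / 2) * KW.B b u (fun x => Real.exp (- u x)) := rfl
      linarith
    have hconst := KW.B_exp_neg hb hconn hm huE hM hB
    apply hne
    classical
    funext x
    have h3 := hweak (Pi.single x 1) ⟨KW.memL2_of_bdd hm (M := 1) fun y => by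
      by_cases hy : y = x <;> simp [hy], KW.fin_single hb x⟩
    have h4 : energyBil b u (Pi.single x 1) = 0 := by
      simp [energyBil, fun p : X × X => hconst p.1 p.2]
    rw [h4, tsum_eq_single x (fun y hy => by simp [hy])] at h3
    exact hzero x (by simpa using h3.symm)
  · rintro ⟨hmean, ⟨x₁, hx₁⟩, -⟩
    have hneg : ∑' x, h x * m x < 0 := by
      by_contra! hcon
      exact absurd hmean (not_lt.2 (div_nonneg hcon hmX.le))
    have hsh : Summable fun x => h x * m x := by
      have := KW.summable_hg hm hh2 (g := fun _ => 1) (M := 1) (by simp)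
      simpa using this
    classical
    have hex : ∃ w : X → ℝ, FinEnergy b w ∧ (∃ M, ∀ x, |w x| ≤ M) ∧
        ∑' x, h x * Real.exp (w x) * m x = 0 := by
      set S := ∑' x, h x * m x with hS
      have hd : 0 < h x₁ * m x₁ := mul_pos hx₁ (hm.pos _)
      set r : ℝ := 1 + (-S) / (h x₁ * m x₁) with hr
      have hrpos : 0 < r := by
        have : 0 < (-S) / (h x₁ * m x₁) := div_pos (by linarith) hd
        linarith
      refine ⟨fun x => Real.log r * (Pi.single x₁ 1 : X → ℝ) x,
        KW.fin_of_le hb |Real.log r| (KW.fin_single hb x₁) fun x y => ?_,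
        ⟨|Real.log r|, fun x => ?_⟩, ?_⟩
      · rw [← mul_sub, abs_mul]
      · rw [abs_mul]
        refine mul_le_of_le_one_right (abs_nonneg _) ?_
        by_cases hx : x = x₁ <;> simp [hx]
      · have h1 : HasSum (fun x => (Pi.single x₁ (-S) : X → ℝ) x) (-S) := hasSum_pi_single _ _
        have h2 := hsh.hasSum.add h1
        rw [← hS, add_neg_cancel] at h2
        rw [← h2.tsum_eq]
        refine tsum_congr fun x => ?_
        by_cases hx : x = x₁
        · subst hx
          simp only [Pi.single_eq_same, mul_one, Real.exp_log hrpos]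
          rw [hr]
          have := (hm.pos x).ne'
          field_simp
        · simp [hx]
    obtain ⟨u, huE, ⟨C, hu⟩, hc, hmin⟩ := KW.exists_min hb hconn hm hcc hh2 hex x₁
    obtain ⟨l, hl⟩ := KW.euler hb hm hh2 huE hu hc hmin hx₁.ne'
    have hlpos : 0 < l := by
      have h1 := KW.exp_neg_mem hb hm huE hu
      have h2 := hl _ h1.2 (hcc _ h1)
      have h3 : ∑' x, h x * (Real.exp (u x) * Real.exp (- u x)) * m x = ∑' x, h x * m x := by
        refine tsum_congr fun x => ?_
        rw [← Real.exp_add]; simp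
      rw [h3] at h2
      by_contra! hcon
      have hconst := KW.B_exp_neg hb hconn hm huE hu
        (by rw [h2]; exact mul_nonneg_of_nonpos_of_nonpos hcon hneg.le)
      have h4 : ∑' x, h x * Real.exp (u x) * m x = (∑' x, h x * m x) * Real.exp (u x₁) := by
        rw [← tsum_mul_right]
        refine tsum_congr fun x => ?_
        rw [hconst x x₁]; ring
      rw [hc] at h4
      exact absurd h4.symm (mul_neg_of_neg_of_pos hneg (Real.exp_pos _)).ne
    have hl2 : 0 < l / 2 := by linarith
    have hwb : ∀ x, |u x + Real.log (l / 2)| ≤ C + |Real.log (l / 2)| := fun x =>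
      (abs_add_le _ _).trans (add_le_add (hu x) le_rfl)
    refine ⟨fun x => u x + Real.log (l / 2), ⟨KW.memL2_of_bdd hm hwb,
      by simpa [FinEnergy] using huE⟩, KW.memL2_mul_bdd hm hh2 (KW.exp_bdd hwb), fun v hv => ?_⟩
    have h1 := hl v hv.2 (hcc v hv)
    have h2 : energyBil b (fun x => u x + Real.log (l / 2)) v = (1 / 2) * KW.B b u v := by
      simp [energyBil, KW.B]
    rw [h2, h1, ← mul_assoc, ← tsum_mul_left]
    refine tsum_congr fun x => ?_
    simp only
    rw [Real.exp_add, Real.exp_log hl2]; ring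
end

section
/- Let b be a connected, canonically compactifiable graph over a finite discrete measure space (X,m), and let h ∈ ℓ²(X,m) with h not identically zero and h̄ < 0. Then there exists c₀ < 0 such that for every c with c₀ < c < 0 there exists u ∈ D(L) with Lu = h e^u − c (i.e. Lu(x) = h(x)e^{u(x)} − c for all x ∈ X). -/
open scoped BigOperators

section Aux
variable {X : Type*}

lemma aux_bil_summable {b : X → X → ℝ} (hb : IsGraph b) {u v : X → ℝ}
    (hu : FinEnergy b u) (hv : FinEnergy b v) :
    Summable (fun p : X × X => b p.1 p.2 * (u p.1 - u p.2) * (v p.1 - v p.2)) := by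
  refine Summable.of_norm_bounded (g := fun p : X × X => b p.1 p.2 * (u p.1 - u p.2) ^ 2
    + b p.1 p.2 * (v p.1 - v p.2) ^ 2) (Summable.add hu hv) ?_
  intro p
  have h0 := hb.nonneg p.1 p.2
  rw [mul_assoc, Real.norm_eq_abs, abs_mul, abs_of_nonneg h0, ← mul_add]
  refine mul_le_mul_of_nonneg_left ?_ h0
  rw [abs_le]
  constructor <;> nlinarith [sq_nonneg (u p.1 - u p.2 - (v p.1 - v p.2)), sq_nonneg (u p.1 - u p.2 + (v p.1 - v p.2)), sq_nonneg (u p.1 - u p.2), sq_nonneg (v p.1 - v p.2)]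

lemma aux_l2_summable {m : X → ℝ} (hm : FinMeasure m) {u v : X → ℝ}
    (hu : MemL2 m u) (hv : MemL2 m v) :
    Summable (fun x => u x * v x * m x) := by
  refine Summable.of_norm_bounded (g := fun x => u x ^ 2 * m x + v x ^ 2 * m x)
    (Summable.add hu hv) ?_
  intro x
  have h0 := (hm.pos x).le
  rw [Real.norm_eq_abs, abs_mul, abs_of_nonneg h0, ← add_mul]
  refine mul_le_mul_of_nonneg_right ?_ h0
  rw [abs_le]
  constructor <;> nlinarith [sq_nonneg (u x - v x), sq_nonneg (u x + v x), sq_nonneg (u x), sq_nonneg (v x)]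

lemma aux_edge {b : X → X → ℝ} (hb : IsGraph b) (hconn : GraphConnected b) (o x : X) :
    ∃ K : ℝ, 0 ≤ K ∧ ∀ u : X → ℝ, FinEnergy b u → (u x - u o) ^ 2 ≤ K * energyBil b u u := by
  have hx := hconn o x
  have hQ : ∀ u : X → ℝ, energyBil b u u = 1 / 2 * ∑' p : X × X, b p.1 p.2 * (u p.1 - u p.2) ^ 2 := by
    intro u
    unfold energyBil
    congr 2; funext p; ring
  induction hx with
  | refl => exact ⟨0, le_rfl, fun u _ => by simp⟩
  | @tail y z _ hyz ih =>
    obtain ⟨K, hK, ih⟩ := ih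
    refine ⟨2 * K + 4 / b y z, by positivity, fun u hu => ?_⟩
    have h1 := ih u hu
    have h2 : b y z * (u y - u z) ^ 2 ≤ ∑' p : X × X, b p.1 p.2 * (u p.1 - u p.2) ^ 2 :=
      hu.le_tsum (y, z) (fun p _ => mul_nonneg (hb.nonneg _ _) (sq_nonneg _))
    have h3 : (u y - u z) ^ 2 ≤ 2 / b y z * energyBil b u u := by
      rw [hQ, div_mul_eq_mul_div, le_div_iff₀ hyz]; linarith
    have : (2 * K + 4 / b y z) * energyBil b u u = 2 * (K * energyBil b u u) + 2 * (2 / b y z * energyBil b u u) := by ring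
    rw [this]
    nlinarith [sq_nonneg ((u z - u y) - (u y - u o))]

lemma aux_one {b : X → X → ℝ} {m : X → ℝ} (hm : FinMeasure m) (c : ℝ) : MemDQ b m (fun _ => c) := by
  constructor
  · exact hm.summable.mul_left _
  · simp [FinEnergy, summable_zero]

/-- Hilbert space realisation of the form domain. -/
theorem aux_hilbert.{u} {X : Type u} {b : X → X → ℝ} {m : X → ℝ} (hb : IsGraph b) (hm : FinMeasure m) :
    ∃ (H : Type u) (_ : NormedAddCommGroup H) (_ : InnerProductSpace ℝ H) (_ : CompleteSpace H)
      (ev : X → H →L[ℝ] ℝ),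
      (∀ u : H, MemDQ b m (fun x => ev x u)) ∧
      (∀ f : X → ℝ, MemDQ b m f → ∃ u : H, ∀ x, ev x u = f x) ∧
      (∀ u v : H, inner ℝ u v = energyBil b (fun x => ev x u) (fun x => ev x v)
        + ∑' x, ev x u * ev x v * m x) := by
  let E := lp (fun _ : X ⊕ (X × X) => ℝ) 2
  let coord : (X ⊕ (X × X)) → E →L[ℝ] ℝ := fun i => lp.evalCLM ℝ (fun _ : X ⊕ (X × X) => ℝ) (p := 2) i
  have hcoord : ∀ i (F : E), coord i F = F i := fun i F => rfl
  let ev : X → E →L[ℝ] ℝ := fun x => (Real.sqrt (m x))⁻¹ • coord (Sum.inl x)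
  let con : X × X → E →L[ℝ] ℝ := fun p => coord (Sum.inr p) - Real.sqrt (b p.1 p.2 / 2) • (ev p.1 - ev p.2)
  let H : Submodule ℝ E := ⨅ p, LinearMap.ker (con p).toLinearMap
  have hmem : ∀ F : E, F ∈ H ↔ ∀ p : X × X, F (Sum.inr p) = Real.sqrt (b p.1 p.2 / 2) * (ev p.1 F - ev p.2 F) := by
    intro F
    simp only [H, Submodule.mem_iInf, LinearMap.mem_ker]
    refine forall_congr' fun p => ?_
    simp [con, hcoord, sub_eq_zero]
  have hclosed : IsClosed (H : Set E) := by
    have : (H : Set E) = ⋂ p, {F | con p F = 0} := by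
      ext F; simp [H, Submodule.mem_iInf]
    rw [this]
    exact isClosed_iInter fun p => isClosed_eq (con p).continuous continuous_const
  have hsm : ∀ x, 0 < Real.sqrt (m x) := fun x => Real.sqrt_pos.2 (hm.pos x)
  have hinl : ∀ (F : E) x, F (Sum.inl x) = Real.sqrt (m x) * ev x F := by
    intro F x
    have := (hsm x).ne'
    simp [ev, hcoord]
    field_simp
  have hsum : ∀ F : E, Summable (fun i => F i ^ 2) := by
    intro F
    have := lp.memℓp F
    rw [memℓp_gen_iff (by norm_num)] at this
    simpa using this
  have hDQ : ∀ F ∈ H, MemDQ b m (fun x => ev x F) := by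
    intro F hF
    rw [hmem] at hF
    have hs := hsum F
    constructor
    · have := hs.comp_injective (i := (Sum.inl : X → X ⊕ (X × X))) Sum.inl_injective
      refine this.congr fun x => ?_
      simp only [Function.comp, hinl, mul_pow, Real.sq_sqrt (hm.pos x).le]; ring
    · have := (hs.comp_injective (i := (Sum.inr : X × X → X ⊕ (X × X))) Sum.inr_injective).mul_left 2
      refine this.congr fun p => ?_
      simp only [Function.comp, hF, mul_pow, Real.sq_sqrt (div_nonneg (hb.nonneg p.1 p.2) zero_le_two)]; ring
  refine ⟨H, inferInstance, inferInstance, hclosed.completeSpace_coe, fun x => (ev x).comp H.subtypeL, ?_, ?_, ?_⟩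
  · rintro ⟨F, hF⟩
    exact hDQ F hF
  · intro f hf
    let g : X ⊕ (X × X) → ℝ := Sum.elim (fun x => Real.sqrt (m x) * f x) (fun p => Real.sqrt (b p.1 p.2 / 2) * (f p.1 - f p.2))
    have hg : Memℓp g 2 := by
      rw [memℓp_gen_iff (by norm_num)]
      have : Summable (fun i => g i ^ 2) := by
        refine Summable.sum _ ?_ ?_
        · refine hf.1.congr fun x => ?_
          simp [g, Function.comp, mul_pow, Real.sq_sqrt (hm.pos x).le]; ring
        · refine (hf.2.mul_left (1/2)).congr fun p => ?_
          simp only [g, Function.comp, Sum.elim_inr, mul_pow, Real.sq_sqrt (div_nonneg (hb.nonneg p.1 p.2) zero_le_two)]; ring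
      simpa using this
    let F : E := ⟨g, hg⟩
    have hev : ∀ x, ev x F = f x := by
      intro x
      have h1 := hinl F x
      have h2 : F (Sum.inl x) = Real.sqrt (m x) * f x := rfl
      rw [h2] at h1
      exact (mul_left_cancel₀ (hsm x).ne' h1).symm
    have hF : F ∈ H := by
      rw [hmem]
      intro p
      rw [hev, hev]; rfl
    exact ⟨⟨F, hF⟩, hev⟩
  · rintro ⟨F, hF⟩ ⟨G, hG⟩
    have hF' := hDQ F hF
    have hG' := hDQ G hG
    rw [hmem] at hF hG
    have h1 : inner ℝ F G = ∑' i, F i * G i := by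
      rw [lp.inner_eq_tsum]
      congr 1; funext i; simp [mul_comm]
    have e1 : (fun x => F (Sum.inl x) * G (Sum.inl x)) = fun x => ev x F * ev x G * m x := by
      funext x
      rw [hinl, hinl]
      calc _ = (Real.sqrt (m x) * Real.sqrt (m x)) * (ev x F * ev x G) := by ring
        _ = _ := by rw [Real.mul_self_sqrt (hm.pos x).le]; ring
    have e2 : (fun p => F (Sum.inr p) * G (Sum.inr p)) = fun p : X × X => (1/2) * (b p.1 p.2 * (ev p.1 F - ev p.2 F) * (ev p.1 G - ev p.2 G)) := by
      funext p
      rw [hF, hG]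
      calc _ = (Real.sqrt (b p.1 p.2 / 2) * Real.sqrt (b p.1 p.2 / 2)) * ((ev p.1 F - ev p.2 F) * (ev p.1 G - ev p.2 G)) := by ring
        _ = _ := by rw [Real.mul_self_sqrt (div_nonneg (hb.nonneg p.1 p.2) zero_le_two)]; ring
    have s1 := aux_l2_summable hm hF'.1 hG'.1
    have s2 := aux_bil_summable hb hF'.2 hG'.2
    change inner ℝ F G = _
    rw [h1]
    rw [← e1] at s1
    have s2' := s2.mul_left (1 / 2)
    have h4 : energyBil b (fun x => ev x F) (fun x => ev x G) = ∑' p : X × X, F (Sum.inr p) * G (Sum.inr p) := by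
      rw [e2, tsum_mul_left]; rfl
    change _ = energyBil b (fun x => ev x F) (fun x => ev x G) + ∑' x, ev x F * ev x G * m x
    rw [h4, ← e1, add_comm]
    rw [← e2] at s2'
    exact Summable.tsum_sum s1 s2'
end Aux
section Solve
variable {X : Type*} {b : X → X → ℝ} {m : X → ℝ}
  {H : Type*} [NormedAddCommGroup H] [InnerProductSpace ℝ H]

/-- The functional `v ↦ ∑ f v m`. -/
noncomputable def auxJ (m : X → ℝ) (ev : X → H →L[ℝ] ℝ) (f : X → ℝ) : H →L[ℝ] ℝ :=
  ∑' x, (f x * m x) • ev x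

lemma auxJ_summable (hm : FinMeasure m) {ev : X → H →L[ℝ] ℝ} {C : ℝ} (hC : ∀ x, ‖ev x‖ ≤ C)
    {f : X → ℝ} (hf : Summable (fun x => |f x| * m x)) :
    Summable (fun x => ‖(f x * m x) • ev x‖) := by
  refine Summable.of_nonneg_of_le (fun x => norm_nonneg _) ?_ (hf.mul_right C)
  intro x
  rw [norm_smul, Real.norm_eq_abs, abs_mul, abs_of_pos (hm.pos x)]
  exact mul_le_mul_of_nonneg_left (hC x) (mul_nonneg (abs_nonneg _) (hm.pos x).le)

lemma auxJ_apply (hm : FinMeasure m) {ev : X → H →L[ℝ] ℝ} {C : ℝ} (hC : ∀ x, ‖ev x‖ ≤ C)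
    {f : X → ℝ} (hf : Summable (fun x => |f x| * m x)) (v : H) :
    auxJ m ev f v = ∑' x, f x * ev x v * m x := by
  have h1 := ((auxJ_summable hm hC hf).of_norm).hasSum
  have h2 := h1.mapL (ContinuousLinearMap.apply ℝ ℝ v)
  have h3 := h2.tsum_eq
  simp only [ContinuousLinearMap.apply_apply, smul_apply, smul_eq_mul] at h3
  rw [auxJ, ← h3]
  exact tsum_congr fun x => by ring

lemma auxJ_norm (hm : FinMeasure m) {ev : X → H →L[ℝ] ℝ} {C : ℝ} (hC : ∀ x, ‖ev x‖ ≤ C)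
    {f : X → ℝ} (hf : Summable (fun x => |f x| * m x)) :
    ‖auxJ m ev f‖ ≤ C * ∑' x, |f x| * m x := by
  have hs := auxJ_summable hm hC hf
  refine (norm_tsum_le_tsum_norm hs).trans ?_
  rw [← tsum_mul_left]
  refine hs.tsum_le_tsum ?_ (hf.mul_left C)
  intro x
  rw [norm_smul, Real.norm_eq_abs, abs_mul, abs_of_pos (hm.pos x), mul_comm]
  exact mul_le_mul_of_nonneg_right (hC x) (mul_nonneg (abs_nonneg _) (hm.pos x).le)

lemma auxJ_sub (hm : FinMeasure m) {ev : X → H →L[ℝ] ℝ} {C : ℝ} (hC : ∀ x, ‖ev x‖ ≤ C)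
    {f g : X → ℝ} (hf : Summable (fun x => |f x| * m x)) (hg : Summable (fun x => |g x| * m x)) :
    auxJ m ev f - auxJ m ev g = auxJ m ev (fun x => f x - g x) := by
  rw [auxJ, auxJ, auxJ, ← Summable.tsum_sub (auxJ_summable hm hC hf).of_norm (auxJ_summable hm hC hg).of_norm]
  exact tsum_congr fun x => by ext v; simp; ring

/-- Lax-Milgram solution operator for `Q(u,v) + u(o) v(o)`. -/
theorem aux_solve [CompleteSpace H] (hb : IsGraph b) (hconn : GraphConnected b) (hm : FinMeasure m) (o : X)
    (ev : X → H →L[ℝ] ℝ) (hDQ : ∀ u : H, MemDQ b m (fun x => ev x u))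
    (hin : ∀ u v : H, inner ℝ u v = energyBil b (fun x => ev x u) (fun x => ev x v)
        + ∑' x, ev x u * ev x v * m x) {C : ℝ} (hC : ∀ x, ‖ev x‖ ≤ C) :
    ∃ K : ℝ, 0 < K ∧ ∃ G : (H →L[ℝ] ℝ) → H,
      (∀ φ v, energyBil b (fun x => ev x (G φ)) (fun x => ev x v) + ev o (G φ) * ev o v = φ v) ∧
      (∀ φ, ‖G φ‖ ≤ K * ‖φ‖) ∧ (∀ φ ψ, ‖G φ - G ψ‖ ≤ K * ‖φ - ψ‖) := by
  have hC0 : 0 ≤ C := (norm_nonneg _).trans (hC o)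
  have hl2 : ∀ u v : H, Summable (fun x => ev x u * ev x v * m x) :=
    fun u v => aux_l2_summable hm (hDQ u).1 (hDQ v).1
  have hpt' : ∀ (u : H) x, |ev x u| ≤ C * ‖u‖ := fun u x =>
    ((ev x).le_opNorm u).trans (mul_le_mul_of_nonneg_right (hC x) (norm_nonneg _))
  let B0 : H →ₗ[ℝ] H →ₗ[ℝ] ℝ := LinearMap.mk₂ ℝ
    (fun u v => inner ℝ u v - (∑' x, ev x u * ev x v * m x) + ev o u * ev o v)
    (by
      intro u u' v
      have : ∑' x, ev x (u + u') * ev x v * m x = (∑' x, ev x u * ev x v * m x) + ∑' x, ev x u' * ev x v * m x := by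
        rw [← (hl2 u v).tsum_add (hl2 u' v)]
        exact tsum_congr fun x => by rw [map_add]; ring
      rw [this, inner_add_left, map_add]; ring)
    (by
      intro c u v
      have : ∑' x, ev x (c • u) * ev x v * m x = c * ∑' x, ev x u * ev x v * m x := by
        rw [← tsum_mul_left]
        exact tsum_congr fun x => by rw [map_smul, smul_eq_mul]; ring
      rw [this, real_inner_smul_left, map_smul, smul_eq_mul, smul_eq_mul]; ring)
    (by
      intro u v v'
      have : ∑' x, ev x u * ev x (v + v') * m x = (∑' x, ev x u * ev x v * m x) + ∑' x, ev x u * ev x v' * m x := by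
        rw [← (hl2 u v).tsum_add (hl2 u v')]
        exact tsum_congr fun x => by rw [map_add]; ring
      rw [this, inner_add_right, map_add]; ring)
    (by
      intro c u v
      have : ∑' x, ev x u * ev x (c • v) * m x = c * ∑' x, ev x u * ev x v * m x := by
        rw [← tsum_mul_left]
        exact tsum_congr fun x => by rw [map_smul, smul_eq_mul]; ring
      rw [this, real_inner_smul_right, map_smul, smul_eq_mul, smul_eq_mul]; ring)
  have hB0 : ∀ u v, B0 u v = inner ℝ u v - (∑' x, ev x u * ev x v * m x) + ev o u * ev o v :=
    fun u v => rfl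
  have hprod : ∀ (u v : H) x, |ev x u * ev x v| ≤ C ^ 2 * (‖u‖ * ‖v‖) := by
    intro u v x
    rw [abs_mul]
    have := mul_le_mul (hpt' u x) (hpt' v x) (abs_nonneg _) (mul_nonneg hC0 (norm_nonneg _))
    linarith
  have hbound : ∀ u v, ‖B0 u v‖ ≤ (1 + C ^ 2 * (∑' x, m x) + C ^ 2) * ‖u‖ * ‖v‖ := by
    intro u v
    rw [hB0, Real.norm_eq_abs]
    have h1 := abs_real_inner_le_norm u v
    have h2 := hprod u v o
    have h3 : |∑' x, ev x u * ev x v * m x| ≤ C ^ 2 * (‖u‖ * ‖v‖) * ∑' x, m x := by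
      rw [← tsum_mul_left, ← Real.norm_eq_abs]
      refine tsum_of_norm_bounded (hm.summable.mul_left _).hasSum fun x => ?_
      rw [Real.norm_eq_abs, abs_mul, abs_of_pos (hm.pos x)]
      exact mul_le_mul_of_nonneg_right (hprod u v x) (hm.pos x).le
    rw [abs_le] at h1 h2 h3 ⊢
    constructor <;> nlinarith
  let B : H →L[ℝ] H →L[ℝ] ℝ := B0.mkContinuous₂ _ hbound
  have hB : ∀ u v, B u v = energyBil b (fun x => ev x u) (fun x => ev x v) + ev o u * ev o v := by
    intro u v
    change B0 u v = _
    rw [hB0, hin]; ring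
  -- coercivity
  choose Kx hKx0 hKx using aux_edge hb hconn o
  obtain ⟨F, hF⟩ : ∃ F : Finset X, (∑' x, m x) - ∑ x ∈ F, m x ≤ 1 / (2 * (C ^ 2 + 1)) := by
    have h1 : ∀ᶠ F : Finset X in Filter.atTop, (∑' x, m x) - 1 / (2 * (C ^ 2 + 1)) < ∑ x ∈ F, m x :=
      hm.summable.hasSum.eventually (lt_mem_nhds (sub_lt_self _ (by positivity)))
    obtain ⟨F, hF⟩ := h1.exists
    exact ⟨F, by linarith⟩
  set KF : ℝ := ∑ x ∈ F, (2 * Kx x + 2) * m x with hKF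
  have hKF0 : 0 ≤ KF := Finset.sum_nonneg fun x _ => mul_nonneg (by linarith [hKx0 x]) (hm.pos x).le
  have hQ0 : ∀ u : H, 0 ≤ energyBil b (fun x => ev x u) (fun x => ev x u) := by
    intro u
    unfold energyBil
    refine mul_nonneg (by norm_num) (tsum_nonneg fun p => ?_)
    rw [mul_assoc]
    exact mul_nonneg (hb.nonneg _ _) (mul_self_nonneg _)
  have hcoer : ∀ u : H, ‖u‖ * ‖u‖ ≤ (2 * (1 + KF)) * B u u := by
    intro u
    have hn := hin u u
    rw [real_inner_self_eq_norm_mul_norm] at hn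
    have hBu := hB u u
    have hQu := hQ0 u
    set Q := energyBil b (fun x => ev x u) (fun x => ev x u) with hQ
    have hl2 := hl2 u u
    have hpt : ∀ x, ev x u * ev x u ≤ C ^ 2 * (‖u‖ * ‖u‖) :=
      fun x => (le_abs_self _).trans (hprod u u x)
    have hs2 : Summable (fun x => C ^ 2 * (‖u‖ * ‖u‖) * m x) := hm.summable.mul_left _
    have h1 : ∑ x ∈ F, (C ^ 2 * (‖u‖ * ‖u‖) * m x - ev x u * ev x u * m x) ≤
        ∑' x, (C ^ 2 * (‖u‖ * ‖u‖) * m x - ev x u * ev x u * m x) := by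
      refine (hs2.sub hl2).sum_le_tsum F fun x _ => ?_
      have := mul_le_mul_of_nonneg_right (hpt x) (hm.pos x).le
      linarith
    rw [hs2.tsum_sub hl2, Finset.sum_sub_distrib, tsum_mul_left, ← Finset.mul_sum] at h1
    have h2 : ∑ x ∈ F, ev x u * ev x u * m x ≤ KF * B u u := by
      rw [hKF, Finset.sum_mul]
      refine Finset.sum_le_sum fun x _ => ?_
      have h3 := hKx x _ (hDQ u).2
      rw [← hQ] at h3
      have h4 : ev x u * ev x u ≤ (2 * Kx x + 2) * B u u := by
        rw [hBu]
        have := mul_nonneg (hKx0 x) (mul_self_nonneg (ev o u))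
        nlinarith [sq_nonneg (ev x u - 2 * ev o u)]
      have := mul_le_mul_of_nonneg_right h4 (hm.pos x).le
      linarith
    have h5 : C ^ 2 * (‖u‖ * ‖u‖) * ((∑' x, m x) - ∑ x ∈ F, m x) ≤ 1 / 2 * (‖u‖ * ‖u‖) := by
      have := mul_le_mul_of_nonneg_left hF (by positivity : 0 ≤ C ^ 2 * (‖u‖ * ‖u‖))
      refine this.trans ?_
      rw [mul_one_div, div_le_iff₀ (by positivity)]
      nlinarith [mul_self_nonneg ‖u‖]
    have h6 : Q ≤ B u u := by rw [hBu]; nlinarith [mul_self_nonneg (ev o u)]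
    nlinarith
  have hpos : 0 < 2 * (1 + KF) := by positivity
  have hco : IsCoercive B := by
    refine ⟨(2 * (1 + KF))⁻¹, by positivity, fun u => ?_⟩
    rw [mul_assoc, inv_mul_le_iff₀ hpos]
    exact hcoer u
  let G : (H →L[ℝ] ℝ) → H := fun φ => hco.continuousLinearEquivOfBilin.symm ((InnerProductSpace.toDual ℝ H).symm φ)
  have hG : ∀ φ v, B (G φ) v = φ v := by
    intro φ v
    rw [← hco.continuousLinearEquivOfBilin_apply]
    simp [G]
  have hdiff : ∀ φ ψ, ‖G φ - G ψ‖ ≤ (2 * (1 + KF)) * ‖φ - ψ‖ := by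
    intro φ ψ
    have h1 := hcoer (G φ - G ψ)
    have h2 : B (G φ - G ψ) (G φ - G ψ) = (φ - ψ) (G φ - G ψ) := by
      rw [map_sub B, sub_apply, hG, hG]; rfl
    have h3 : (φ - ψ) (G φ - G ψ) ≤ ‖φ - ψ‖ * ‖G φ - G ψ‖ := (le_abs_self _).trans ((φ - ψ).le_opNorm _)
    rw [h2] at h1
    rcases (norm_nonneg (G φ - G ψ)).eq_or_lt with h0 | h0
    · rw [← h0]; positivity
    · refine le_of_mul_le_mul_right ?_ h0
      refine h1.trans ?_
      have := mul_le_mul_of_nonneg_left h3 hpos.le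
      linarith
  have hG0 : G 0 = 0 := by simp [G]
  refine ⟨2 * (1 + KF), hpos, G, fun φ v => by rw [← hB, hG], fun φ => ?_, hdiff⟩
  have := hdiff φ 0
  rwa [hG0, sub_zero, sub_zero] at this
end Solve
lemma aux_exp_lip {s t : ℝ} (hs : |s| ≤ 1) (ht : |t| ≤ 1) :
    |Real.exp s - Real.exp t| ≤ Real.exp 1 * |s - t| := by
  have key : ∀ s t : ℝ, |s| ≤ 1 → Real.exp s - Real.exp t ≤ Real.exp 1 * |s - t| := by
    intro s t hs
    have h1 : Real.exp t = Real.exp s * Real.exp (t - s) := by rw [← Real.exp_add]; ring_nf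
    have h2 := Real.add_one_le_exp (t - s)
    have h3 : Real.exp s ≤ Real.exp 1 := Real.exp_le_exp.2 (abs_le.1 hs).2
    have h4 := Real.exp_pos s
    have h5 : Real.exp s * (s - t) ≤ Real.exp s * |s - t| := mul_le_mul_of_nonneg_left (le_abs_self _) h4.le
    have h6 : Real.exp s * |s - t| ≤ Real.exp 1 * |s - t| := mul_le_mul_of_nonneg_right h3 (abs_nonneg _)
    rw [h1]
    nlinarith [mul_le_mul_of_nonneg_left h2 h4.le]
  rw [abs_le]
  have h1 := key s t hs
  have h2 := key t s ht
  rw [abs_sub_comm] at h2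
  constructor <;> linarith

lemma aux_fixed {H : Type*} [NormedAddCommGroup H] [CompleteSpace H] (T : H → H) {r : ℝ} (hr : 0 < r)
    (hmaps : ∀ w, ‖w‖ ≤ r → ‖T w‖ ≤ r)
    (hlip : ∀ w w', ‖w‖ ≤ r → ‖w'‖ ≤ r → ‖T w - T w'‖ ≤ 1 / 2 * ‖w - w'‖) :
    ∃ w, ‖w‖ ≤ r ∧ T w = w := by
  have hsf : Set.MapsTo T (Metric.closedBall 0 r) (Metric.closedBall 0 r) := by
    intro w hw
    rw [mem_closedBall_zero_iff] at hw ⊢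
    exact hmaps w hw
  have hc : ContractingWith (1 / 2) (hsf.restrict T _ _) := by
    refine ⟨by rw [← NNReal.coe_lt_coe]; norm_num, LipschitzWith.of_dist_le_mul ?_⟩
    rintro ⟨w, hw⟩ ⟨w', hw'⟩
    rw [mem_closedBall_zero_iff] at hw hw'
    rw [Subtype.dist_eq, Subtype.dist_eq, dist_eq_norm, dist_eq_norm]
    simpa using hlip w w' hw hw'
  obtain ⟨w, hw, hfix, _⟩ := hc.exists_fixedPoint' Metric.isClosed_closedBall.isComplete hsf
    (x := 0) (by simp [hr.le]) (edist_ne_top _ _)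
  rw [mem_closedBall_zero_iff] at hw
  exact ⟨w, hw, hfix⟩

section Main
variable {X : Type*} {b : X → X → ℝ} {m : X → ℝ}
  {H : Type*} [NormedAddCommGroup H] [InnerProductSpace ℝ H]

lemma aux_main [CompleteSpace H]
    (hm : FinMeasure m) (o : X) (ev : X → H →L[ℝ] ℝ)
    {C : ℝ} (hCpos : 0 < C) (hC : ∀ x, ‖ev x‖ ≤ C)
    {K : ℝ} (hK : 0 < K) (G : (H →L[ℝ] ℝ) → H)
    (hG1 : ∀ φ, ‖G φ‖ ≤ K * ‖φ‖) (hG2 : ∀ φ ψ, ‖G φ - G ψ‖ ≤ K * ‖φ - ψ‖)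
    (h : X → ℝ) (hh1 : Summable (fun x => |h x| * m x)) (hA0 : ∑' x, h x * m x < 0) :
    ∃ δ > 0, ∀ c : ℝ, |c| < δ → ∃ (w : H) (A : ℝ), A < 0 ∧
      Summable (fun x => |h x * Real.exp (ev x w) * ((∑' x, m x) / A) - 1| * m x) ∧
      Summable (fun x => h x * Real.exp (ev x w) * m x) ∧
      A = ∑' x, h x * Real.exp (ev x w) * m x ∧
      G (c • auxJ m ev (fun x => h x * Real.exp (ev x w) * ((∑' x, m x) / A) - 1)) = w := by
  set M := ∑' x, m x with hM
  have hMpos : 0 < M := hm.summable.tsum_pos (fun x => (hm.pos x).le) o (hm.pos o)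
  set S := ∑' x, |h x| * m x with hS
  have hS0 : 0 ≤ S := tsum_nonneg fun x => mul_nonneg (abs_nonneg _) (hm.pos x).le
  obtain ⟨a, ha⟩ : ∃ a, a = -(∑' x, h x * m x) / 2 := ⟨_, rfl⟩
  have hapos : 0 < a := by rw [ha]; linarith
  obtain ⟨E, hE⟩ : ∃ E, E = Real.exp 1 := ⟨_, rfl⟩
  have hEpos : 0 < E := hE ▸ Real.exp_pos 1
  obtain ⟨r, hr⟩ : ∃ r, r = min (1 / C) (a / ((S + 1) * E * C)) := ⟨_, rfl⟩
  have hrpos : 0 < r := by rw [hr]; exact lt_min (by positivity) (by positivity)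
  have hCr : C * r ≤ 1 := by
    have : r ≤ 1 / C := hr ▸ min_le_left _ _
    rw [le_div_iff₀ hCpos] at this; linarith
  have hSr : S * E * C * r ≤ a := by
    have h1 : r ≤ a / ((S + 1) * E * C) := hr ▸ min_le_right _ _
    rw [le_div_iff₀ (by positivity)] at h1
    have : 0 < E * C * r := by positivity
    nlinarith
  let A : H → ℝ := fun w => ∑' x, h x * Real.exp (ev x w) * m x
  have hpt' : ∀ (u : H) x, |ev x u| ≤ C * ‖u‖ := fun u x =>
    ((ev x).le_opNorm u).trans (mul_le_mul_of_nonneg_right (hC x) (norm_nonneg _))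
  have hpt : ∀ w : H, ‖w‖ ≤ r → ∀ x, |ev x w| ≤ 1 := fun w hw x =>
    (hpt' w x).trans ((mul_le_mul_of_nonneg_left hw hCpos.le).trans hCr)
  have hexp : ∀ w : H, ‖w‖ ≤ r → ∀ x, Real.exp (ev x w) ≤ E := fun w hw x =>
    hE ▸ Real.exp_le_exp.2 (abs_le.1 (hpt w hw x)).2
  have hlipx : ∀ w w' : H, ‖w‖ ≤ r → ‖w'‖ ≤ r → ∀ x,
      |Real.exp (ev x w) - Real.exp (ev x w')| ≤ E * (C * ‖w - w'‖) := by
    intro w w' hw hw' x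
    refine (aux_exp_lip (hpt w hw x) (hpt w' hw' x)).trans ?_
    rw [← map_sub, ← hE]
    exact mul_le_mul_of_nonneg_left (hpt' _ x) hEpos.le
  have hsA : ∀ w : H, ‖w‖ ≤ r → Summable (fun x => h x * Real.exp (ev x w) * m x) := by
    intro w hw
    refine Summable.of_norm_bounded (hh1.mul_left E) fun x => ?_
    rw [Real.norm_eq_abs, abs_mul, abs_mul, abs_of_pos (hm.pos x), abs_of_pos (Real.exp_pos _)]
    have := mul_le_mul_of_nonneg_left (hexp w hw x) (mul_nonneg (abs_nonneg (h x)) (hm.pos x).le)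
    linarith
  have hAlip : ∀ w w' : H, ‖w‖ ≤ r → ‖w'‖ ≤ r → |A w - A w'| ≤ S * E * C * ‖w - w'‖ := by
    intro w w' hw hw'
    change |(∑' x, _) - ∑' x, _| ≤ _
    rw [← (hsA w hw).tsum_sub (hsA w' hw'), ← Real.norm_eq_abs,
      show S * E * C * ‖w - w'‖ = E * (C * ‖w - w'‖) * S by ring, hS, ← tsum_mul_left]
    refine tsum_of_norm_bounded (hh1.mul_left _).hasSum fun x => ?_
    rw [← sub_mul, ← mul_sub, Real.norm_eq_abs, abs_mul, abs_mul, abs_of_pos (hm.pos x)]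
    have := mul_le_mul_of_nonneg_left (hlipx w w' hw hw' x) (mul_nonneg (abs_nonneg (h x)) (hm.pos x).le)
    linarith
  have hAneg : ∀ w : H, ‖w‖ ≤ r → A w ≤ -a := by
    intro w hw
    have h1 := hAlip w 0 hw (by simpa using hrpos.le)
    have h2 : A 0 = -(2 * a) := by
      simp only [A, map_zero, Real.exp_zero, mul_one]; rw [ha]; ring
    rw [h2, sub_zero] at h1
    have h3 := (abs_le.1 h1).2
    have : S * E * C * ‖w‖ ≤ S * E * C * r := mul_le_mul_of_nonneg_left hw (by positivity)
    linarith
  have hAabs : ∀ w : H, ‖w‖ ≤ r → a ≤ |A w| := fun w hw => by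
    rw [abs_of_neg (by linarith [hAneg w hw])]; linarith [hAneg w hw]
  let f : H → X → ℝ := fun w x => h x * Real.exp (ev x w) * (M / A w) - 1
  have hMA : ∀ w : H, ‖w‖ ≤ r → |M / A w| ≤ M / a := by
    intro w hw
    rw [abs_div, abs_of_pos hMpos]
    exact div_le_div_of_nonneg_left hMpos.le hapos (hAabs w hw)
  have hfb : ∀ w : H, ‖w‖ ≤ r → ∀ x, |f w x| * m x ≤ E * (M / a) * (|h x| * m x) + m x := by
    intro w hw x
    have h1 : |f w x| ≤ |h x| * E * (M / a) + 1 := by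
      refine (abs_sub _ _).trans ?_
      rw [abs_one, abs_mul, abs_mul, abs_of_pos (Real.exp_pos _)]
      have := mul_le_mul (mul_le_mul_of_nonneg_left (hexp w hw x) (abs_nonneg (h x))) (hMA w hw)
        (abs_nonneg _) (by positivity)
      linarith
    have := mul_le_mul_of_nonneg_right h1 (hm.pos x).le
    linarith
  have hsb : Summable (fun x => E * (M / a) * (|h x| * m x) + m x) := (hh1.mul_left _).add hm.summable
  have hsf : ∀ w : H, ‖w‖ ≤ r → Summable (fun x => |f w x| * m x) := fun w hw =>
    Summable.of_nonneg_of_le (fun x => mul_nonneg (abs_nonneg _) (hm.pos x).le) (hfb w hw) hsb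
  have hJ : ∀ w : H, ‖w‖ ≤ r → ‖auxJ m ev (f w)‖ ≤ C * (E * (M / a) * S + M) := by
    intro w hw
    refine (auxJ_norm hm hC (hsf w hw)).trans (mul_le_mul_of_nonneg_left ?_ hCpos.le)
    refine ((hsf w hw).tsum_le_tsum (hfb w hw) hsb).trans ?_
    rw [(hh1.mul_left _).tsum_add hm.summable, tsum_mul_left]
  obtain ⟨R, hR⟩ : ∃ R, R = M * (E * C / a + E * (S * E * C) / (a * a)) := ⟨_, rfl⟩
  have hR0 : 0 ≤ R := by rw [hR]; positivity
  have hfd : ∀ w w' : H, ‖w‖ ≤ r → ‖w'‖ ≤ r → ∀ x,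
      |f w x - f w' x| * m x ≤ R * ‖w - w'‖ * (|h x| * m x) := by
    intro w w' hw hw' x
    have hA1 : A w ≠ 0 := by have := hAneg w hw; intro h0; linarith
    have hA2 : A w' ≠ 0 := by have := hAneg w' hw'; intro h0; linarith
    have e1 : f w x - f w' x = h x * (M * ((Real.exp (ev x w) - Real.exp (ev x w')) / A w
        + Real.exp (ev x w') * (A w' - A w) / (A w * A w'))) := by
      simp only [f]; field_simp; ring
    have b1 : |(Real.exp (ev x w) - Real.exp (ev x w')) / A w| ≤ E * (C * ‖w - w'‖) / a := by
      rw [abs_div]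
      exact div_le_div₀ (by positivity) (hlipx w w' hw hw' x) hapos (hAabs w hw)
    have b2 : |Real.exp (ev x w') * (A w' - A w) / (A w * A w')| ≤ E * (S * E * C * ‖w - w'‖) / (a * a) := by
      rw [abs_div, abs_mul, abs_mul, abs_of_pos (Real.exp_pos _), abs_sub_comm]
      refine div_le_div₀ (by positivity) ?_ (by positivity) ?_
      · exact mul_le_mul (hexp w' hw' x) (hAlip w w' hw hw') (abs_nonneg _) hEpos.le
      · exact mul_le_mul (hAabs w hw) (hAabs w' hw') hapos.le (abs_nonneg _)
    have b3 : |f w x - f w' x| ≤ |h x| * (R * ‖w - w'‖) := by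
      rw [e1, abs_mul, abs_mul, abs_of_pos hMpos]
      refine mul_le_mul_of_nonneg_left ?_ (abs_nonneg _)
      have : R * ‖w - w'‖ = M * (E * (C * ‖w - w'‖) / a + E * (S * E * C * ‖w - w'‖) / (a * a)) := by
        rw [hR]; ring
      rw [this]
      exact mul_le_mul_of_nonneg_left ((abs_add_le _ _).trans (add_le_add b1 b2)) hMpos.le
    have := mul_le_mul_of_nonneg_right b3 (hm.pos x).le
    linarith
  have hJd : ∀ w w' : H, ‖w‖ ≤ r → ‖w'‖ ≤ r →
      ‖auxJ m ev (f w) - auxJ m ev (f w')‖ ≤ C * (R * ‖w - w'‖ * S) := by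
    intro w w' hw hw'
    rw [auxJ_sub hm hC (hsf w hw) (hsf w' hw')]
    have hsd : Summable (fun x => |f w x - f w' x| * m x) :=
      Summable.of_nonneg_of_le (fun x => mul_nonneg (abs_nonneg _) (hm.pos x).le) (hfd w w' hw hw')
        (hh1.mul_left _)
    refine (auxJ_norm hm hC hsd).trans (mul_le_mul_of_nonneg_left ?_ hCpos.le)
    refine (hsd.tsum_le_tsum (hfd w w' hw hw') (hh1.mul_left _)).trans ?_
    rw [tsum_mul_left]
  obtain ⟨P1, hP1⟩ : ∃ P, P = K * (C * (E * (M / a) * S + M)) := ⟨_, rfl⟩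
  obtain ⟨P2, hP2⟩ : ∃ P, P = K * (C * (R * S)) := ⟨_, rfl⟩
  have hP10 : 0 ≤ P1 := by rw [hP1]; positivity
  have hP20 : 0 ≤ P2 := by rw [hP2]; positivity
  refine ⟨min (r / (P1 + 1)) (1 / 2 / (P2 + 1)), lt_min (by positivity) (by positivity), fun c hc => ?_⟩
  have hc1 : |c| * P1 ≤ r := by
    have h1 := hc.le.trans (min_le_left _ _)
    rw [le_div_iff₀ (by positivity)] at h1
    nlinarith [abs_nonneg c]
  have hc2 : |c| * P2 ≤ 1 / 2 := by
    have h1 := hc.le.trans (min_le_right _ _)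
    rw [le_div_iff₀ (by positivity)] at h1
    nlinarith [abs_nonneg c]
  obtain ⟨w, hw, hfix⟩ := aux_fixed (fun w => G (c • auxJ m ev (f w))) hrpos
    (by
      intro w hw
      refine (hG1 _).trans ?_
      rw [norm_smul, Real.norm_eq_abs]
      have := mul_le_mul_of_nonneg_left (hJ w hw) (mul_nonneg hK.le (abs_nonneg c))
      rw [hP1] at hc1
      linarith)
    (by
      intro w w' hw hw'
      refine (hG2 _ _).trans ?_
      have hsub : c • auxJ m ev (f w) - c • auxJ m ev (f w') = c • (auxJ m ev (f w) - auxJ m ev (f w')) := by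
        ext v; simp; ring
      rw [hsub, norm_smul, Real.norm_eq_abs]
      have h1 := mul_le_mul_of_nonneg_left (hJd w w' hw hw') (mul_nonneg hK.le (abs_nonneg c))
      rw [hP2] at hc2
      have h2 := mul_le_mul_of_nonneg_right hc2 (norm_nonneg (w - w'))
      linarith)
  exact ⟨w, A w, by linarith [hAneg w hw], hsf w hw, hsA w hw, rfl, hfix⟩
end Main

/-- if `h̄ < 0`, there is `c₀ < 0` such that `Lu = h e^u - c` is
solvable for every `c₀ < c < 0`. -/
theorem stmt9 {X : Type*} [Countable X] (b : X → X → ℝ) (m : X → ℝ)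
    (hb : IsGraph b) (hconn : GraphConnected b) (hm : FinMeasure m)
    (hcc : CanCompact b m) (h : X → ℝ) (hh2 : MemL2 m h) (hne : h ≠ 0)
    (hmean : mean m h < 0) :
    ∃ c₀ < (0 : ℝ), ∀ c : ℝ, c₀ < c → c < 0 →
      ∃ u : X → ℝ, IsLap b m u (fun x => h x * Real.exp (u x) - c) := by
  have hM0 : 0 ≤ ∑' x, m x := tsum_nonneg fun x => (hm.pos x).le
  have hA0 : ∑' x, h x * m x < 0 := by
    by_contra hcon
    exact absurd hmean (not_lt.2 (div_nonneg (not_lt.1 hcon) hM0))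
  obtain ⟨o⟩ : Nonempty X := by
    by_contra hcon
    rw [not_nonempty_iff] at hcon
    simp at hA0
  have hh1 : Summable (fun x => |h x| * m x) := by
    refine Summable.of_nonneg_of_le (fun x => mul_nonneg (abs_nonneg _) (hm.pos x).le) ?_
      (Summable.add hh2 hm.summable)
    intro x
    have h1 : |h x| ≤ h x ^ 2 + 1 := by
      rw [← sq_abs]; nlinarith [sq_nonneg (|h x| - 1), abs_nonneg (h x)]
    have := mul_le_mul_of_nonneg_right h1 (hm.pos x).le
    linarith
  obtain ⟨H, _, _, _, ev, hDQ, hsurj, hin⟩ := aux_hilbert hb hm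
  obtain ⟨C0, hC0⟩ : ∃ C', ∀ x, ‖ev x‖ ≤ C' := banach_steinhaus (fun u => hcc _ (hDQ u))
  obtain ⟨C, hC, hCpos⟩ : ∃ C, (∀ x, ‖ev x‖ ≤ C) ∧ 0 < C :=
    ⟨max C0 1, fun x => (hC0 x).trans (le_max_left _ _), lt_max_of_lt_right one_pos⟩
  obtain ⟨K, hK, G, hG, hG1, hG2⟩ := aux_solve hb hconn hm o ev hDQ hin hC
  obtain ⟨δ, hδ, hmain⟩ := aux_main hm o ev hCpos hC hK G hG1 hG2 h hh1 hA0
  refine ⟨-δ, by linarith, fun c hc hc0 => ?_⟩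
  obtain ⟨w, A, hA, hsf, hsA, hAeq, hfix⟩ := hmain c (by rw [abs_of_neg hc0]; linarith)
  have hMpos : 0 < ∑' x, m x := hm.summable.tsum_pos (fun x => (hm.pos x).le) o (hm.pos o)
  set M := ∑' x, m x with hM
  set f : X → ℝ := fun x => h x * Real.exp (ev x w) * (M / A) - 1 with hf
  have heq : ∀ v, energyBil b (fun x => ev x w) (fun x => ev x v) + ev o w * ev o v
      = c * ∑' x, f x * ev x v * m x := by
    intro v
    have := hG (c • auxJ m ev f) v
    rw [hfix] at this
    rw [this, smul_apply, auxJ_apply hm hC hsf, smul_eq_mul]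
  -- test with the constant function
  have how : ev o w = 0 := by
    obtain ⟨v, hv⟩ := hsurj (fun _ => 1) (aux_one hm 1)
    have h1 := heq v
    simp only [hv, energyBil, sub_self, mul_zero, tsum_zero, mul_one, zero_add] at h1
    rw [h1]
    have h2 : ∑' x, f x * m x = (M / A) * A - M := by
      conv_rhs => rw [hAeq, hM, ← hAeq, ← hM]
      have : ∀ x, f x * m x = (M / A) * (h x * Real.exp (ev x w) * m x) - m x := by
        intro x; simp only [hf]; ring
      rw [tsum_congr this, (hsA.mul_left _).tsum_sub hm.summable, tsum_mul_left, ← hAeq]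
    rw [h2, div_mul_cancel₀ _ hA.ne, sub_self, mul_zero]
  have ht : 0 < c * M / A := div_pos_of_neg_of_neg (mul_neg_of_neg_of_pos hc0 hMpos) hA
  have hexp : ∀ x, h x * Real.exp (ev x w + Real.log (c * M / A)) - c = c * f x := by
    intro x
    rw [Real.exp_add, Real.exp_log ht]; simp only [hf]; ring
  obtain ⟨N, hN⟩ := hcc _ (hDQ w)
  obtain ⟨k, hk⟩ := hsurj (fun _ => Real.log (c * M / A)) (aux_one hm _)
  have hu : MemDQ b m (fun x => ev x w + Real.log (c * M / A)) := by
    have := hDQ (w + k)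
    simpa only [map_add, hk] using this
  refine ⟨fun x => ev x w + Real.log (c * M / A), hu, ?_, ?_⟩
  · obtain ⟨N, hN⟩ := hcc _ hu
    refine Summable.of_nonneg_of_le (fun x => mul_nonneg (sq_nonneg _) (hm.pos x).le) ?_
      ((Summable.mul_left (2 * Real.exp N ^ 2) hh2).add (hm.summable.mul_left (2 * c ^ 2)))
    intro x
    have h1 : Real.exp (ev x w + Real.log (c * M / A)) ≤ Real.exp N :=
      Real.exp_le_exp.2 (abs_le.1 (hN x)).2
    have h2 := Real.exp_pos (ev x w + Real.log (c * M / A))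
    simp only
    generalize Real.exp (ev x w + Real.log (c * M / A)) = y at h1 h2
    have h3 : y ^ 2 ≤ Real.exp N ^ 2 := by gcongr
    have h4 : (h x * y - c) ^ 2 ≤ 2 * Real.exp N ^ 2 * h x ^ 2 + 2 * c ^ 2 := by
      nlinarith [sq_nonneg (h x * y + c), mul_le_mul_of_nonneg_left h3 (sq_nonneg (h x))]
    have := mul_le_mul_of_nonneg_right h4 (hm.pos x).le
    linarith
  · intro v hv
    obtain ⟨v', hv'⟩ := hsurj v hv
    have h1 := heq v'
    rw [how, zero_mul, add_zero] at h1
    simp only [hv'] at h1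
    have h2 : energyBil b (fun x => ev x w + Real.log (c * M / A)) v = energyBil b (fun x => ev x w) v := by
      unfold energyBil
      simp only [add_sub_add_right_eq_sub]
    rw [h2, h1, ← tsum_mul_left]
    refine tsum_congr fun x => ?_
    simp only [hexp]; ring
end

section
/- Let b be a connected, canonically compactifiable graph over a finite discrete measure space (X,m), and let h ∈ ℓ²(X,m) with h not identically zero, h ≤ 0 pointwise and h̄ < 0. Then for every c < 0 there exists u ∈ D(L) with Lu = h e^u − c (i.e. Lu(x) = h(x)e^{u(x)} − c for all x ∈ X). -/
open scoped BigOperators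

namespace KW

/-- Unnormalised energy. -/
noncomputable def E {X : Type*} (b : X → X → ℝ) (u : X → ℝ) : ℝ :=
  ∑' p : X × X, b p.1 p.2 * (u p.1 - u p.2) ^ 2

lemma E_nonneg {X : Type*} {b : X → X → ℝ} (hb : IsGraph b) (u : X → ℝ) : 0 ≤ E b u :=
  tsum_nonneg fun p => mul_nonneg (hb.nonneg _ _) (sq_nonneg _)

lemma contract {X : Type*} {b : X → X → ℝ} (hb : IsGraph b) {u w : X → ℝ} (k : ℝ)
    (hu : FinEnergy b u) (hw : ∀ x y, (w x - w y) ^ 2 ≤ k * (u x - u y) ^ 2) :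
    FinEnergy b w ∧ E b w ≤ k * E b u := by
  have hle : ∀ p : X × X, b p.1 p.2 * (w p.1 - w p.2) ^ 2 ≤
      k * (b p.1 p.2 * (u p.1 - u p.2) ^ 2) := fun p => by
    have := mul_le_mul_of_nonneg_left (hw p.1 p.2) (hb.nonneg p.1 p.2)
    linarith
  have hs : FinEnergy b w := Summable.of_nonneg_of_le
    (fun p => mul_nonneg (hb.nonneg _ _) (sq_nonneg _)) hle (hu.mul_left k)
  refine ⟨hs, ?_⟩
  unfold E
  rw [← tsum_mul_left]
  exact hs.tsum_le_tsum hle (hu.mul_left k)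

lemma pointwise {X : Type*} {b : X → X → ℝ} (hb : IsGraph b) (hconn : GraphConnected b)
    (o x : X) : ∃ C : ℝ, 0 ≤ C ∧ ∀ w, FinEnergy b w → (w x - w o) ^ 2 ≤ C * E b w := by
  induction hconn o x with
  | refl => exact ⟨0, le_rfl, fun w _ => by simp⟩
  | @tail y z _ hyz ih =>
    obtain ⟨C, hC, h⟩ := ih
    refine ⟨2 * C + 2 / b y z, by positivity, fun w hw => ?_⟩
    have h1 := h w hw
    have h2 : b y z * (w y - w z) ^ 2 ≤ E b w :=
      hw.le_tsum (y, z) (fun p _ => mul_nonneg (hb.nonneg _ _) (sq_nonneg _))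
    have h3 : (w y - w z) ^ 2 ≤ E b w / b y z := by
      rw [le_div_iff₀ hyz]; linarith
    have h4 : 2 / b y z * E b w = 2 * (E b w / b y z) := by ring
    nlinarith [sq_nonneg ((w y - w o) + (w y - w z))]

lemma small_l2 {X : Type*} {b : X → X → ℝ} {m : X → ℝ} (hb : IsGraph b)
    (hconn : GraphConnected b) (hm : FinMeasure m) (o : X) (N δ : ℝ) (hδ : 0 < δ) :
    ∃ ε : ℝ, 0 < ε ∧ ∀ w : X → ℝ, FinEnergy b w → w o = 0 → (∀ x, |w x| ≤ N) → E b w ≤ ε →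
      MemL2 m w ∧ ∑' x, w x ^ 2 * m x ≤ δ := by
  choose C hC0 hC using pointwise hb hconn o
  have hlim : Filter.Tendsto (fun ε : ℝ => ∑' x, min (N ^ 2) (C x * ε) * m x)
      (nhdsWithin 0 (Set.Ioi 0)) (nhds (∑' x : X, (0:ℝ))) := by
    apply tendsto_tsum_of_dominated_convergence (bound := fun x => N ^ 2 * m x)
      (hm.summable.mul_left _)
    · intro x
      have : Filter.Tendsto (fun ε : ℝ => min (N ^ 2) (C x * ε) * m x) (nhds 0)
          (nhds (min (N ^ 2) (C x * 0) * m x)) := by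
        apply Continuous.tendsto
        fun_prop
      have h0 : min (N ^ 2) (C x * 0) * m x = 0 := by
        rw [mul_zero, min_eq_right (sq_nonneg _), zero_mul]
      rw [h0] at this
      exact this.mono_left nhdsWithin_le_nhds
    · filter_upwards [self_mem_nhdsWithin] with ε hε x
      have hε' : (0:ℝ) < ε := hε
      have : 0 ≤ min (N ^ 2) (C x * ε) := le_min (sq_nonneg _) (mul_nonneg (hC0 x) hε'.le)
      rw [Real.norm_of_nonneg (mul_nonneg this (hm.pos x).le)]
      exact mul_le_mul_of_nonneg_right (min_le_left _ _) (hm.pos x).le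
  rw [tsum_zero] at hlim
  obtain ⟨ε, h1, h2⟩ := ((hlim.eventually (gt_mem_nhds hδ)).and self_mem_nhdsWithin).exists
  have hε' : (0:ℝ) < ε := h2
  refine ⟨ε, hε', fun w hw hwo hwN hwE => ?_⟩
  have hle : ∀ x, w x ^ 2 * m x ≤ min (N ^ 2) (C x * ε) * m x := fun x => by
    apply mul_le_mul_of_nonneg_right _ (hm.pos x).le
    apply le_min
    · exact sq_le_sq' (by linarith [neg_abs_le (w x), hwN x]) (by linarith [le_abs_self (w x), hwN x])
    · have := hC x w hw
      rw [hwo, sub_zero] at this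
      exact this.trans (mul_le_mul_of_nonneg_left hwE (hC0 x))
  have hsm : Summable (fun x => min (N ^ 2) (C x * ε) * m x) :=
    Summable.of_nonneg_of_le
      (fun x => mul_nonneg (le_min (sq_nonneg _) (mul_nonneg (hC0 x) hε'.le)) (hm.pos x).le)
      (fun x => mul_le_mul_of_nonneg_right (min_le_left _ _) (hm.pos x).le)
      (hm.summable.mul_left (N ^ 2))
  have hs : MemL2 m w := Summable.of_nonneg_of_le
    (fun x => mul_nonneg (sq_nonneg _) (hm.pos x).le) hle hsm
  exact ⟨hs, (hs.tsum_le_tsum hle hsm).trans h1.le⟩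

/-- Sum of nonnegative functions with geometrically bounded sums is summable. -/
lemma summable_double {Y : Type*} (f : ℕ → Y → ℝ) (hf : ∀ n y, 0 ≤ f n y)
    (hs : ∀ n, Summable (f n)) (hb : ∀ n, ∑' y, f n y ≤ (1 / 2) ^ n) :
    (∀ y, Summable fun n => f n y) ∧ Summable (fun y => ∑' n, f n y) := by
  have h : Summable (fun p : ℕ × Y => f p.1 p.2) := by
    rw [summable_prod_of_nonneg (fun p => hf _ _)]
    exact ⟨hs, Summable.of_nonneg_of_le (fun n => tsum_nonneg (hf n)) hb
      (summable_geometric_of_lt_one (by norm_num) (by norm_num))⟩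
  have h' : Summable (fun p : Y × ℕ => f p.2 p.1) := h.prod_symm
  rw [summable_prod_of_nonneg (fun p => hf _ _)] at h'
  exact h'

lemma ciSup_sub_sq_le (f g : ℕ → ℝ) (hf : BddAbove (Set.range f)) (hg : BddAbove (Set.range g))
    (hs : Summable fun n => (f n - g n) ^ 2) :
    ((⨆ n, f n) - ⨆ n, g n) ^ 2 ≤ ∑' n, (f n - g n) ^ 2 := by
  set S := ∑' n, (f n - g n) ^ 2
  have hS : ∀ n, (f n - g n) ^ 2 ≤ S := fun n => hs.le_tsum n (fun _ _ => sq_nonneg _)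
  have hab : ∀ n, |f n - g n| ≤ Real.sqrt S := fun n => Real.abs_le_sqrt (hS n)
  have h1 : (⨆ n, f n) ≤ (⨆ n, g n) + Real.sqrt S := ciSup_le fun n => by
    linarith [le_ciSup hg n, (abs_le.1 (hab n)).2]
  have h2 : (⨆ n, g n) ≤ (⨆ n, f n) + Real.sqrt S := ciSup_le fun n => by
    linarith [le_ciSup hf n, (abs_le.1 (hab n)).1]
  have hS0 : 0 ≤ S := tsum_nonneg fun _ => sq_nonneg _
  calc ((⨆ n, f n) - ⨆ n, g n) ^ 2 ≤ Real.sqrt S ^ 2 :=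
        sq_le_sq' (by linarith) (by linarith)
    _ = S := Real.sq_sqrt hS0

lemma osc_aux {X : Type*} {b : X → X → ℝ} {m : X → ℝ} (hb : IsGraph b)
    (hconn : GraphConnected b) (hm : FinMeasure m) (hcc : CanCompact b m) (o : X) :
    ∃ ε N : ℝ, 0 < ε ∧ 0 < N ∧ ∀ w : X → ℝ, FinEnergy b w → w o = 0 → (∀ x, 0 ≤ w x) →
      E b w ≤ ε → ∀ x, w x ≤ N := by
  by_contra hcon
  push Not at hcon
  have key : ∀ n : ℕ, ∃ w : X → ℝ, FinEnergy b w ∧ (∀ x, 0 ≤ w x) ∧ E b w ≤ (1 / 2) ^ n ∧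
      MemL2 m w ∧ (∑' x, w x ^ 2 * m x ≤ (1 / 2) ^ n) ∧ ∃ x, (n : ℝ) < w x := by
    intro n
    obtain ⟨ε, hε, hw⟩ := small_l2 hb hconn hm o ((n : ℝ) + 1) ((1 / 2) ^ n) (by positivity)
    obtain ⟨w, hwE, hwo, hw0, hwe, x, hx⟩ := hcon (min ε ((1 / 2) ^ n)) ((n : ℝ) + 1)
      (lt_min hε (by positivity)) (by positivity)
    obtain ⟨h1, h2⟩ := contract hb (w := fun x => min (w x) ((n : ℝ) + 1)) 1 hwE (fun x y => by
      rw [one_mul]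
      apply sq_le_sq.2
      have := abs_min_sub_min_le_max (w x) ((n : ℝ) + 1) (w y) ((n : ℝ) + 1)
      simpa using this)
    rw [one_mul] at h2
    have h0 : ∀ x, 0 ≤ min (w x) ((n : ℝ) + 1) := fun x => le_min (hw0 x) (by positivity)
    obtain ⟨h3, h4⟩ := hw _ h1 (by simp only [hwo]; exact min_eq_left (by positivity))
      (fun x => by rw [abs_of_nonneg (h0 x)]; exact min_le_right _ _)
      (h2.trans (hwe.trans (min_le_left _ _)))
    refine ⟨_, h1, h0, h2.trans (hwe.trans (min_le_right _ _)), h3, h4, x, ?_⟩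
    rw [min_eq_right hx.le]; linarith
  choose w hwE hw0 hwe hw2 hwe2 hwx using key
  obtain ⟨A1, A2⟩ := summable_double (fun n x => w n x ^ 2 * m x)
    (fun n x => mul_nonneg (sq_nonneg _) (hm.pos x).le) hw2 hwe2
  obtain ⟨B1, B2⟩ := summable_double
    (fun n (p : X × X) => b p.1 p.2 * (w n p.1 - w n p.2) ^ 2)
    (fun n p => mul_nonneg (hb.nonneg _ _) (sq_nonneg _)) hwE hwe
  have A1' : ∀ x, Summable fun n => w n x ^ 2 := fun x =>
    (summable_mul_right_iff (hm.pos x).ne').1 (A1 x)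
  have hsq : ∀ x n, w n x ≤ Real.sqrt (∑' n, w n x ^ 2) := fun x n =>
    Real.le_sqrt_of_sq_le ((A1' x).le_tsum n (fun _ _ => sq_nonneg _))
  have hbd : ∀ x, BddAbove (Set.range fun n => w n x) := fun x =>
    ⟨Real.sqrt (∑' n, w n x ^ 2), by rintro _ ⟨n, rfl⟩; exact hsq x n⟩
  have hmem : MemDQ b m (fun x => ⨆ n, w n x) := by
    constructor
    · refine Summable.of_nonneg_of_le (fun x => mul_nonneg (sq_nonneg _) (hm.pos x).le)
        (fun x => ?_) A2
      simp only
      rw [tsum_mul_right]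
      apply mul_le_mul_of_nonneg_right _ (hm.pos x).le
      have h1 : (⨆ n, w n x) ≤ Real.sqrt (∑' n, w n x ^ 2) := ciSup_le (hsq x)
      have h2 : 0 ≤ ⨆ n, w n x := (hw0 0 x).trans (le_ciSup (hbd x) 0)
      calc _ ≤ Real.sqrt (∑' n, w n x ^ 2) ^ 2 := by gcongr
        _ = _ := Real.sq_sqrt (tsum_nonneg fun _ => sq_nonneg _)
    · refine Summable.of_nonneg_of_le (fun p => mul_nonneg (hb.nonneg _ _) (sq_nonneg _))
        (fun p => ?_) B2
      simp only
      rw [tsum_mul_left]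
      rcases (hb.nonneg p.1 p.2).eq_or_lt with h0 | h0
      · rw [← h0]; simp
      · apply mul_le_mul_of_nonneg_left _ h0.le
        exact ciSup_sub_sq_le _ _ (hbd _) (hbd _) ((summable_mul_left_iff h0.ne').1 (B1 p))
  obtain ⟨M, hM⟩ := hcc _ hmem
  obtain ⟨n, hn⟩ := exists_nat_gt M
  obtain ⟨x, hx⟩ := hwx n
  have := (le_ciSup (hbd x) n).trans ((le_abs_self _).trans (hM x))
  linarith

lemma osc {X : Type*} {b : X → X → ℝ} {m : X → ℝ} (hb : IsGraph b)
    (hconn : GraphConnected b) (hm : FinMeasure m) (hcc : CanCompact b m) (o : X) :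
    ∃ C : ℝ, 0 < C ∧ ∀ u : X → ℝ, FinEnergy b u → ∀ x, (u x - u o) ^ 2 ≤ C * (E b u + 1) := by
  obtain ⟨ε, N, hε, hN, H⟩ := osc_aux hb hconn hm hcc o
  refine ⟨N ^ 2 / ε, by positivity, fun u hu x => ?_⟩
  have hE := E_nonneg hb u
  set l := Real.sqrt (ε / (E b u + 1)) with hl
  have hl2 : l ^ 2 = ε / (E b u + 1) := Real.sq_sqrt (by positivity)
  have hl0 : 0 ≤ l := Real.sqrt_nonneg _
  obtain ⟨h1, h2⟩ := contract hb (w := fun x => l * |u x - u o|) (l ^ 2) hu (fun x y => by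
    rw [← mul_sub, mul_pow]
    apply mul_le_mul_of_nonneg_left _ (sq_nonneg l)
    apply sq_le_sq.2
    have := abs_abs_sub_abs_le_abs_sub (u x - u o) (u y - u o)
    simpa using this)
  have h3 : l ^ 2 * E b u ≤ ε := by
    rw [hl2, div_mul_eq_mul_div, div_le_iff₀ (by positivity)]
    nlinarith
  have h4 := H _ h1 (by simp) (fun x => by positivity) (h2.trans h3) x
  have h5 : (l * |u x - u o|) ^ 2 ≤ N ^ 2 := by gcongr
  rw [mul_pow, sq_abs, hl2, div_mul_eq_mul_div, div_le_iff₀ (by positivity)] at h5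
  rw [div_mul_eq_mul_div, le_div_iff₀ hε]
  linarith

lemma coercive_real (A a C : ℝ) (hA : 0 < A) (ha : 0 < a) (hC : 0 < C) :
    ∃ K : ℝ, 0 ≤ K ∧ ∀ d q : ℝ, 0 ≤ d →
      A * Real.exp q - a * q - 2 * a * d + d ^ 2 / (4 * C) ≤ A + 1 / 4 → |q| + 2 * d ≤ K := by
  set β := 2 * a * (1 - Real.log (2 * a / A)) with hβ
  set R := A + 1 / 4 + |β| + C * (2 * a + 1) ^ 2 with hR
  have hR0 : 0 ≤ R := by positivity
  refine ⟨R / a + 2 * R, by positivity, fun d q hd h => ?_⟩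
  have h1 : 2 * a * q + β ≤ A * Real.exp q := by
    have := Real.add_one_le_exp (q - Real.log (2 * a / A))
    rw [Real.exp_sub, Real.exp_log (by positivity)] at this
    have h2 := mul_le_mul_of_nonneg_left this (show 0 ≤ 2 * a by positivity)
    have h3 : 2 * a * (Real.exp q / (2 * a / A)) = A * Real.exp q := by field_simp
    rw [h3] at h2
    rw [hβ]; linarith
  have h2 : 0 ≤ A * Real.exp q := by positivity
  have h3 : a * |q| - |β| ≤ A * Real.exp q - a * q := by
    rcases le_total 0 q with hq | hq
    · rw [abs_of_nonneg hq]; linarith [neg_abs_le β]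
    · rw [abs_of_nonpos hq]; linarith [abs_nonneg β]
  have h4 : d - C * (2 * a + 1) ^ 2 ≤ d ^ 2 / (4 * C) - 2 * a * d := by
    have : d ^ 2 / (4 * C) - 2 * a * d - (d - C * (2 * a + 1) ^ 2)
      = (d - 2 * C * (2 * a + 1)) ^ 2 / (4 * C) := by field_simp; ring
    have h5 : 0 ≤ (d - 2 * C * (2 * a + 1)) ^ 2 / (4 * C) := by positivity
    linarith
  have h6 : a * |q| + d ≤ R := by rw [hR]; linarith
  have h7 : d ≤ R := by have := mul_nonneg ha.le (abs_nonneg q); linarith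
  have h8 : |q| ≤ R / a := by rw [le_div_iff₀ ha]; linarith
  linarith

/-- The functional, with `g = -h`. -/
noncomputable def J {X : Type*} (b : X → X → ℝ) (m g : X → ℝ) (a : ℝ) (u : X → ℝ) : ℝ :=
  (1 / 4) * E b u + ∑' x, g x * Real.exp (u x) * m x - a * ∑' x, u x * m x

lemma sm_bdd {X : Type*} {f : X → ℝ} (hf : Summable f) (hf0 : ∀ x, 0 ≤ f x) {v : X → ℝ} {K : ℝ}
    (hv : ∀ x, |v x| ≤ K) : Summable (fun x => v x * f x) := by
  refine Summable.of_norm_bounded (hf.mul_left K) (fun x => ?_)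
  rw [norm_mul, Real.norm_eq_abs, Real.norm_of_nonneg (hf0 x)]
  exact mul_le_mul_of_nonneg_right (hv x) (hf0 x)

lemma abs_exp_le {u K : ℝ} (hu : |u| ≤ K) : |Real.exp u| ≤ Real.exp K := by
  rw [abs_of_pos (Real.exp_pos _)]
  exact Real.exp_le_exp.2 ((le_abs_self _).trans hu)

lemma sm_exp {X : Type*} {m g : X → ℝ} (hm : FinMeasure m) (hg0 : ∀ x, 0 ≤ g x)
    (hg : Summable fun x => g x * m x) {u : X → ℝ} {K : ℝ} (hu : ∀ x, |u x| ≤ K) :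
    Summable (fun x => g x * Real.exp (u x) * m x) := by
  refine (sm_bdd hg (fun x => mul_nonneg (hg0 x) (hm.pos x).le)
    (fun x => abs_exp_le (hu x))).congr (fun x => by ring)

lemma coercive {X : Type*} {b : X → X → ℝ} {m g : X → ℝ} (hb : IsGraph b)
    (hconn : GraphConnected b) (hm : FinMeasure m) (hcc : CanCompact b m)
    (hg0 : ∀ x, 0 ≤ g x) (hg : Summable fun x => g x * m x) (o : X) (hgo : 0 < g o)
    (a : ℝ) (ha : 0 < a) :
    ∃ K : ℝ, 0 ≤ K ∧ ∀ u : X → ℝ, FinEnergy b u → (∃ M, ∀ x, |u x| ≤ M) →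
      J b m g a u ≤ J b m g a 0 → ∀ x, |u x| ≤ K := by
  obtain ⟨C, hC, hosc⟩ := osc hb hconn hm hcc o
  set A := ∑' x, g x * m x with hA
  set μ := ∑' x, m x with hμ
  have hA0 : 0 < A := hg.tsum_pos (fun x => mul_nonneg (hg0 x) (hm.pos x).le) o
    (mul_pos hgo (hm.pos o))
  have hμ0 : 0 < μ := hm.summable.tsum_pos (fun x => (hm.pos x).le) o (hm.pos o)
  obtain ⟨K, hK, hcr⟩ := coercive_real A (a * μ) C hA0 (by positivity) hC
  refine ⟨K, hK, fun u hu ⟨M, hM⟩ hJ x => ?_⟩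
  have hE := E_nonneg hb u
  set d := Real.sqrt (C * (E b u + 1)) with hd
  have hd2 : d ^ 2 = C * (E b u + 1) := Real.sq_sqrt (by positivity)
  have hd0 : 0 ≤ d := Real.sqrt_nonneg _
  have hx : ∀ x, |u x - u o| ≤ d := fun x => Real.abs_le_sqrt (hosc u hu x)
  have hJ0 : J b m g a 0 = A := by
    simp [J, E, hA]
  have h1 : A * Real.exp (u o - d) ≤ ∑' x, g x * Real.exp (u x) * m x := by
    rw [hA, ← tsum_mul_right]
    refine (hg.mul_right _).tsum_le_tsum (fun x => ?_) (sm_exp hm hg0 hg hM)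
    have : Real.exp (u o - d) ≤ Real.exp (u x) :=
      Real.exp_le_exp.2 (by linarith [(abs_le.1 (hx x)).1])
    have := mul_le_mul_of_nonneg_left this (mul_nonneg (hg0 x) (hm.pos x).le)
    linarith
  have h2 : ∑' x, u x * m x ≤ (u o + d) * μ := by
    rw [hμ, ← tsum_mul_left]
    refine (sm_bdd hm.summable (fun x => (hm.pos x).le) hM).tsum_le_tsum (fun x => ?_)
      (hm.summable.mul_left _)
    exact mul_le_mul_of_nonneg_right (by linarith [(abs_le.1 (hx x)).2]) (hm.pos x).le
  have h3 : d ^ 2 / (4 * C) = (E b u + 1) / 4 := by rw [hd2]; field_simp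
  have h4 := mul_le_mul_of_nonneg_left h2 ha.le
  have h5 := hcr d (u o - d) hd0 (by
    rw [hJ0] at hJ
    unfold J at hJ
    rw [h3]
    linarith)
  have h6 := abs_le.1 (hx x)
  have h7 := le_abs_self (u o - d)
  have h8 := neg_abs_le (u o - d)
  exact abs_le.2 ⟨by linarith, by linarith⟩

/-- Extended-valued functional. -/
noncomputable def F {X : Type*} (b : X → X → ℝ) (m g : X → ℝ) (a K : ℝ) (u : X → ℝ) : ENNReal :=
  (∑' p : X × X, ENNReal.ofReal ((1 / 4) * (b p.1 p.2 * (u p.1 - u p.2) ^ 2))) +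
    ∑' x, ENNReal.ofReal (g x * Real.exp (u x) * m x + a * (K - u x) * m x)

lemma F_lsc {X : Type*} (b : X → X → ℝ) (m g : X → ℝ) (a K : ℝ) :
    LowerSemicontinuous (F b m g a K) := by
  apply LowerSemicontinuous.add
  · apply lowerSemicontinuous_tsum
    intro p
    apply Continuous.lowerSemicontinuous
    apply ENNReal.continuous_ofReal.comp
    fun_prop
  · apply lowerSemicontinuous_tsum
    intro p
    apply Continuous.lowerSemicontinuous
    apply ENNReal.continuous_ofReal.comp
    fun_prop

lemma F_eq {X : Type*} {b : X → X → ℝ} {m g : X → ℝ} (hb : IsGraph b) (hm : FinMeasure m)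
    (hg0 : ∀ x, 0 ≤ g x) (hg : Summable fun x => g x * m x) {a K : ℝ} (ha : 0 < a)
    {u : X → ℝ} (hu : FinEnergy b u) (hK : ∀ x, |u x| ≤ K) :
    F b m g a K u = ENNReal.ofReal (J b m g a u + a * K * ∑' x, m x) ∧
      0 ≤ J b m g a u + a * K * ∑' x, m x := by
  have n1 : ∀ p : X × X, 0 ≤ (1 / 4) * (b p.1 p.2 * (u p.1 - u p.2) ^ 2) := fun p =>
    mul_nonneg (by norm_num) (mul_nonneg (hb.nonneg _ _) (sq_nonneg _))
  have n2 : ∀ x, 0 ≤ g x * Real.exp (u x) * m x + a * (K - u x) * m x := fun x => by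
    have h1 := hg0 x
    have h2 := (hm.pos x).le
    have h3 : 0 ≤ K - u x := by linarith [le_abs_self (u x), hK x]
    positivity
  have e1 := sm_exp hm hg0 hg hK
  have e2 := sm_bdd hm.summable (fun x => (hm.pos x).le) hK
  have e3 : Summable (fun x => a * K * m x) := hm.summable.mul_left _
  have e4 : ∀ x, a * (K - u x) * m x = a * K * m x - a * (u x * m x) := fun x => by ring
  have e5 : Summable (fun x => a * (K - u x) * m x) :=
    (e3.sub (e2.mul_left a)).congr (fun x => (e4 x).symm)
  have hJ : J b m g a u + a * K * ∑' x, m x =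
      (∑' p : X × X, (1 / 4) * (b p.1 p.2 * (u p.1 - u p.2) ^ 2)) +
      ∑' x, (g x * Real.exp (u x) * m x + a * (K - u x) * m x) := by
    rw [e1.tsum_add e5, tsum_congr e4, e3.tsum_sub (e2.mul_left a), tsum_mul_left, tsum_mul_left,
      tsum_mul_left]
    unfold J E
    ring
  rw [hJ]
  refine ⟨?_, add_nonneg (tsum_nonneg n1) (tsum_nonneg n2)⟩
  rw [ENNReal.ofReal_add (tsum_nonneg n1) (tsum_nonneg n2),
    ENNReal.ofReal_tsum_of_nonneg n1 (hu.mul_left _),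
    ENNReal.ofReal_tsum_of_nonneg n2 (e1.add e5)]
  rfl

lemma exists_min_s10 {X : Type*} {b : X → X → ℝ} {m g : X → ℝ} (hb : IsGraph b) (hm : FinMeasure m)
    (hg0 : ∀ x, 0 ≤ g x) (hg : Summable fun x => g x * m x) {a K : ℝ} (ha : 0 < a) (hK : 0 ≤ K) :
    ∃ u : X → ℝ, FinEnergy b u ∧ (∀ x, |u x| ≤ K) ∧
      ∀ v : X → ℝ, FinEnergy b v → (∀ x, |v x| ≤ K) → J b m g a u ≤ J b m g a v := by
  have hcomp : IsCompact (Set.univ.pi fun _ : X => Set.Icc (-K) K) :=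
    isCompact_univ_pi fun _ => isCompact_Icc
  have hmem : ∀ v : X → ℝ, v ∈ (Set.univ.pi fun _ : X => Set.Icc (-K) K) ↔ ∀ x, |v x| ≤ K := by
    intro v; simp only [Set.mem_pi, Set.mem_univ, true_implies, Set.mem_Icc, abs_le]
  have h0 : ∀ x, |(0 : X → ℝ) x| ≤ K := fun x => by simpa using hK
  have h0E : FinEnergy b (0 : X → ℝ) := by
    have : (fun p : X × X => b p.1 p.2 * ((0 : X → ℝ) p.1 - (0 : X → ℝ) p.2) ^ 2) = fun _ => 0 := by
      ext; simp
    unfold FinEnergy; rw [this]; exact summable_zero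
  obtain ⟨u, hu, hmin⟩ := LowerSemicontinuousOn.exists_isMinOn (f := F b m g a K)
    ⟨0, (hmem 0).2 h0⟩ hcomp ((F_lsc b m g a K).lowerSemicontinuousOn _)
  rw [hmem] at hu
  have hfin : F b m g a K u ≠ ⊤ := by
    have := hmin ((hmem 0).2 h0)
    simp only [Set.mem_ofPred_eq] at this
    rw [(F_eq hb hm hg0 hg ha h0E h0).1] at this
    exact ne_top_of_le_ne_top ENNReal.ofReal_ne_top this
  have huE : FinEnergy b u := by
    have h1 := (ENNReal.add_ne_top.1 hfin).1
    have h2 := ENNReal.summable_toReal h1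
    have h3 := h2.mul_left 4
    refine h3.congr (fun p => ?_)
    rw [ENNReal.toReal_ofReal
      (mul_nonneg (by norm_num) (mul_nonneg (hb.nonneg _ _) (sq_nonneg _)))]
    ring
  refine ⟨u, huE, hu, fun v hv hvK => ?_⟩
  have := hmin ((hmem v).2 hvK)
  simp only [Set.mem_ofPred_eq] at this
  rw [(F_eq hb hm hg0 hg ha huE hu).1, (F_eq hb hm hg0 hg ha hv hvK).1,
    ENNReal.ofReal_le_ofReal_iff (F_eq hb hm hg0 hg ha hv hvK).2] at this
  linarith

lemma linear_zero (L R t₀ : ℝ) (ht₀ : 0 < t₀)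
    (h : ∀ t : ℝ, |t| ≤ t₀ → 0 ≤ t * L + t ^ 2 * R) : L = 0 := by
  have hd : HasDerivAt (fun t : ℝ => t * L + t ^ 2 * R) (1 * L + (2 * 0 ^ 1 * 1) * R) 0 := by
    have h1 := (hasDerivAt_id (0:ℝ)).mul_const L
    have h2 := ((hasDerivAt_id (0:ℝ)).pow 2).mul_const R
    refine (h1.add h2).congr_deriv ?_ |>.congr_of_eventuallyEq ?_
    · simp
    · exact Filter.Eventually.of_forall fun t => by simp
  have hmin : IsLocalMin (fun t : ℝ => t * L + t ^ 2 * R) 0 := by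
    filter_upwards [Metric.closedBall_mem_nhds (0:ℝ) ht₀] with t ht
    have := h t (by simpa using ht)
    simpa using this
  have := hmin.hasDerivAt_eq_zero hd
  simpa using this

lemma sm_bil {X : Type*} {b : X → X → ℝ} (hb : IsGraph b) {u v : X → ℝ}
    (hu : FinEnergy b u) (hv : FinEnergy b v) :
    Summable (fun p : X × X => b p.1 p.2 * (u p.1 - u p.2) * (v p.1 - v p.2)) := by
  refine Summable.of_norm_bounded (hu.add hv) (fun p => ?_)
  have hbp := hb.nonneg p.1 p.2
  rw [mul_assoc, norm_mul, Real.norm_of_nonneg hbp, Real.norm_eq_abs, ← mul_add]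
  apply mul_le_mul_of_nonneg_left _ hbp
  apply abs_le.2
  constructor <;>
  nlinarith [sq_nonneg (u p.1 - u p.2 + (v p.1 - v p.2)), sq_nonneg (u p.1 - u p.2 - (v p.1 - v p.2)),
    sq_nonneg (u p.1 - u p.2), sq_nonneg (v p.1 - v p.2)]

lemma E_add {X : Type*} {b : X → X → ℝ} (hb : IsGraph b) {u v : X → ℝ}
    (hu : FinEnergy b u) (hv : FinEnergy b v) (t : ℝ) :
    FinEnergy b (fun x => u x + t * v x) ∧
    E b (fun x => u x + t * v x) = E b u + t * (4 * energyBil b u v) + t ^ 2 * E b v := by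
  have hB := sm_bil hb hu hv
  have e : ∀ p : X × X, b p.1 p.2 * (u p.1 + t * v p.1 - (u p.2 + t * v p.2)) ^ 2 =
      b p.1 p.2 * (u p.1 - u p.2) ^ 2 +
        (2 * t) * (b p.1 p.2 * (u p.1 - u p.2) * (v p.1 - v p.2)) +
        t ^ 2 * (b p.1 p.2 * (v p.1 - v p.2) ^ 2) := fun p => by ring
  refine ⟨((hu.add (hB.mul_left (2 * t))).add (hv.mul_left (t ^ 2))).congr
    (fun p => (e p).symm), ?_⟩
  unfold E
  rw [tsum_congr e, (hu.add (hB.mul_left (2 * t))).tsum_add (hv.mul_left (t ^ 2)),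
    hu.tsum_add (hB.mul_left (2 * t)), tsum_mul_left, tsum_mul_left]
  unfold energyBil
  ring

lemma J_add {X : Type*} {b : X → X → ℝ} {m g : X → ℝ} (hb : IsGraph b) (hm : FinMeasure m)
    (hg0 : ∀ x, 0 ≤ g x) (hg : Summable fun x => g x * m x) {a K M : ℝ}
    {u v : X → ℝ} (hu : FinEnergy b u) (hv : FinEnergy b v) (huK : ∀ x, |u x| ≤ K)
    (hvM : ∀ x, |v x| ≤ M) (t : ℝ) (ht : |t| * M ≤ 1) :
    J b m g a (fun x => u x + t * v x) ≤ J b m g a u +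
      t * (energyBil b u v + ∑' x, v x * (g x * Real.exp (u x) * m x) - a * ∑' x, v x * m x) +
      t ^ 2 * ((1 / 4) * E b v + ∑' x, v x ^ 2 * (g x * Real.exp (u x) * m x)) := by
  have htv : ∀ x, |t * v x| ≤ 1 := fun x => by
    rw [abs_mul]
    exact (mul_le_mul_of_nonneg_left (hvM x) (abs_nonneg t)).trans ht
  have hw0 : ∀ x, 0 ≤ g x * Real.exp (u x) * m x := fun x =>
    mul_nonneg (mul_nonneg (hg0 x) (Real.exp_pos _).le) (hm.pos x).le
  have s0 := sm_exp hm hg0 hg huK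
  have s1 := sm_bdd s0 hw0 hvM
  have s2 : Summable (fun x => v x ^ 2 * (g x * Real.exp (u x) * m x)) :=
    sm_bdd (K := M ^ 2) s0 hw0 (fun x => by
      rw [abs_pow]; exact pow_le_pow_left₀ (abs_nonneg _) (hvM x) 2)
  have s3 : Summable (fun x => g x * Real.exp (u x + t * v x) * m x) :=
    sm_exp (K := K + 1) hm hg0 hg
      (fun x => (abs_add_le _ _).trans (add_le_add (huK x) (htv x)))
  have s4 := sm_bdd hm.summable (fun x => (hm.pos x).le) huK
  have s5 := sm_bdd hm.summable (fun x => (hm.pos x).le) hvM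
  have i1 : ∑' x, g x * Real.exp (u x + t * v x) * m x ≤
      ∑' x, g x * Real.exp (u x) * m x + t * ∑' x, v x * (g x * Real.exp (u x) * m x) +
        t ^ 2 * ∑' x, v x ^ 2 * (g x * Real.exp (u x) * m x) := by
    rw [← tsum_mul_left, ← tsum_mul_left, ← s0.tsum_add (s1.mul_left t),
      ← (s0.add (s1.mul_left t)).tsum_add (s2.mul_left (t ^ 2))]
    refine s3.tsum_le_tsum (fun x => ?_) ((s0.add (s1.mul_left t)).add (s2.mul_left (t ^ 2)))
    have h1 := (abs_le.1 (Real.abs_exp_sub_one_sub_id_le (htv x))).2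
    have h2 : Real.exp (t * v x) ≤ 1 + t * v x + (t * v x) ^ 2 := by linarith
    have h3 := mul_le_mul_of_nonneg_left h2 (hw0 x)
    rw [Real.exp_add]
    linarith
  have i2 : ∑' x, (u x + t * v x) * m x = ∑' x, u x * m x + t * ∑' x, v x * m x := by
    rw [← tsum_mul_left, ← s4.tsum_add (s5.mul_left t)]
    exact tsum_congr fun x => by ring
  unfold J
  rw [(E_add hb hu hv t).2, i2]
  linarith

end KW

/-- if `h ≤ 0` and `h̄ < 0`, then `Lu = h e^u - c` is solvable for
every `c < 0`. -/
theorem stmt10 {X : Type*} [Countable X] (b : X → X → ℝ) (m : X → ℝ)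
    (hb : IsGraph b) (hconn : GraphConnected b) (hm : FinMeasure m)
    (hcc : CanCompact b m) (h : X → ℝ) (hh2 : MemL2 m h) (hne : h ≠ 0)
    (hnonpos : ∀ x, h x ≤ 0) (hmean : mean m h < 0) :
    ∀ c : ℝ, c < 0 →
      ∃ u : X → ℝ, IsLap b m u (fun x => h x * Real.exp (u x) - c) := by
  intro c hc
  obtain ⟨o, ho⟩ := Function.ne_iff.1 hne
  have hg0 : ∀ x, 0 ≤ -h x := fun x => by linarith [hnonpos x]
  have hgo : 0 < -h o := lt_of_le_of_ne (hg0 o) (fun e => ho (by simp; linarith))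
  have hg : Summable fun x => -h x * m x := by
    refine Summable.of_nonneg_of_le (fun x => mul_nonneg (hg0 x) (hm.pos x).le) (fun x => ?_)
      (hm.summable.add hh2)
    have := hm.pos x
    nlinarith [sq_nonneg (h x + 1), mul_nonneg (sq_nonneg (h x + 1)) this.le,
      mul_nonneg (sq_nonneg (h x)) this.le]
  have ha : 0 < -c := by linarith
  obtain ⟨K, hK, hco⟩ := KW.coercive hb hconn hm hcc hg0 hg o hgo (-c) ha
  obtain ⟨u, huE, huK, hmin⟩ := KW.exists_min_s10 hb hm hg0 hg ha (show 0 ≤ K + 1 by linarith)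
  have h0E : FinEnergy b (0 : X → ℝ) := by
    have : (fun p : X × X => b p.1 p.2 * ((0 : X → ℝ) p.1 - (0 : X → ℝ) p.2) ^ 2) = fun _ => 0 := by
      ext; simp
    unfold FinEnergy; rw [this]; exact summable_zero
  have huK' : ∀ x, |u x| ≤ K := hco u huE ⟨_, huK⟩
    (hmin 0 h0E (fun x => by simp; linarith))
  have sq_bd : ∀ {w : ℝ} {B : ℝ}, |w| ≤ B → |w ^ 2| ≤ B ^ 2 := fun {w B} hw => by
    rw [abs_pow]; exact pow_le_pow_left₀ (abs_nonneg _) hw 2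
  have hu2 : MemL2 m u :=
    KW.sm_bdd hm.summable (fun x => (hm.pos x).le) (fun x => sq_bd (huK' x))
  have hf2 : MemL2 m (fun x => h x * Real.exp (u x) - c) := by
    have s1 := KW.sm_bdd hh2 (fun x => mul_nonneg (sq_nonneg _) (hm.pos x).le)
      (fun x => sq_bd (KW.abs_exp_le (huK' x)))
    refine Summable.of_nonneg_of_le (fun x => mul_nonneg (sq_nonneg _) (hm.pos x).le)
      (fun x => ?_) ((s1.mul_left 2).add (hm.summable.mul_left (2 * c ^ 2)))
    have := mul_nonneg (sq_nonneg (h x * Real.exp (u x) + c)) (hm.pos x).le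
    linarith
  refine ⟨u, ⟨hu2, huE⟩, hf2, fun v hv => ?_⟩
  obtain ⟨M₀, hM₀⟩ := hcc v hv
  set M := max M₀ 1
  have hM : ∀ x, |v x| ≤ M := fun x => (hM₀ x).trans (le_max_left _ _)
  have hMpos : 0 < M := lt_of_lt_of_le one_pos (le_max_right _ _)
  have hlin := KW.linear_zero
    (energyBil b u v + ∑' x, v x * (-h x * Real.exp (u x) * m x) - -c * ∑' x, v x * m x)
    ((1 / 4) * KW.E b v + ∑' x, v x ^ 2 * (-h x * Real.exp (u x) * m x)) (1 / M)
    (by positivity) (fun t ht => by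
      have htM : |t| * M ≤ 1 := by rwa [le_div_iff₀ hMpos] at ht
      have h1 := KW.J_add (a := -c) hb hm hg0 hg huE hv.2 huK' hM t htM
      have h2 := hmin _ (KW.E_add hb huE hv.2 t).1 (fun x => by
        refine (abs_add_le _ _).trans (add_le_add (huK' x) ?_)
        rw [abs_mul]
        exact (mul_le_mul_of_nonneg_left (hM x) (abs_nonneg t)).trans htM)
      linarith)
  have s1 : Summable (fun x => v x * (-h x * Real.exp (u x) * m x)) :=
    KW.sm_bdd (KW.sm_exp hm hg0 hg huK') (fun x =>
      mul_nonneg (mul_nonneg (hg0 x) (Real.exp_pos _).le) (hm.pos x).le) hM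
  have s2 := KW.sm_bdd hm.summable (fun x => (hm.pos x).le) hM
  have e : ∑' x, (h x * Real.exp (u x) - c) * v x * m x =
      -c * ∑' x, v x * m x - ∑' x, v x * (-h x * Real.exp (u x) * m x) := by
    rw [← tsum_mul_left, ← (s2.mul_left (-c)).tsum_sub s1]
    exact tsum_congr fun x => by ring
  rw [e]
  linarith
end

section
/- Let b be a connected, canonically compactifiable graph over a finite discrete measure space (X,m), and let k ∈ ℓ²(X,m) with k(x) > 0 for all x ∈ X. Then for every f ∈ ℓ²(X,m) there exists a unique u ∈ D(L) such that Lu + k·u = f; that is, the operator u ↦ Lu + k·u with domain D(L) is a bijection from D(L) onto ℓ²(X,m). (Here k·u ∈ ℓ²(X,m) since u is bounded and k ∈ ℓ²(X,m).) -/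
open scoped BigOperators

open Filter Topology

namespace Stmt11Aux

variable {X : Type*}

lemma finEnergy_of_lip {b : X → X → ℝ} (hb : IsGraph b) {u v : X → ℝ} (hu : FinEnergy b u)
    (h : ∀ x y, |v x - v y| ≤ |u x - u y|) : FinEnergy b v := by
  refine Summable.of_nonneg_of_le (fun p => mul_nonneg (hb.nonneg _ _) (sq_nonneg _)) (fun p => ?_) hu
  exact mul_le_mul_of_nonneg_left (sq_le_sq.mpr (h _ _)) (hb.nonneg _ _)

lemma memL2_of_bdd {m f u : X → ℝ} (hm : ∀ x, 0 < m x) (hf : MemL2 m f) {M : ℝ}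
    (hM : ∀ x, |u x| ≤ M) : MemL2 m (fun x => f x * u x) := by
  refine Summable.of_nonneg_of_le (fun x => mul_nonneg (sq_nonneg _) (hm x).le) (fun x => ?_)
    (hf.mul_left (M ^ 2))
  have h1 : u x ^ 2 ≤ M ^ 2 := sq_le_sq' (by linarith [(abs_le.mp (hM x)).1]) (abs_le.mp (hM x)).2
  have h2 : 0 ≤ f x ^ 2 * m x := mul_nonneg (sq_nonneg _) (hm x).le
  nlinarith [mul_le_mul_of_nonneg_right h1 h2]

lemma memL2_one {m : X → ℝ} (hm : FinMeasure m) : MemL2 m (fun _ => 1) := by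
  simpa [MemL2] using hm.summable

lemma summable_mul {m f v : X → ℝ} (hm : ∀ x, 0 < m x) (hf : MemL2 m f) (hv : MemL2 m v) :
    Summable (fun x => f x * v x * m x) := by
  refine Summable.of_norm_bounded (hf.add hv) (fun x => ?_)
  rw [Real.norm_eq_abs, abs_mul, abs_of_pos (hm x), ← add_mul]
  refine mul_le_mul_of_nonneg_right ?_ (hm x).le
  rw [abs_le]
  constructor <;> nlinarith [sq_nonneg (f x + v x), sq_nonneg (f x - v x), sq_nonneg (f x), sq_nonneg (v x)]

lemma summable_bil {b : X → X → ℝ} (hb : IsGraph b) {u v : X → ℝ} (hu : FinEnergy b u)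
    (hv : FinEnergy b v) :
    Summable (fun p : X × X => b p.1 p.2 * (u p.1 - u p.2) * (v p.1 - v p.2)) := by
  refine Summable.of_norm_bounded (hu.add hv) (fun p => ?_)
  rw [Real.norm_eq_abs, mul_assoc, abs_mul, abs_of_nonneg (hb.nonneg _ _), ← mul_add]
  refine mul_le_mul_of_nonneg_left ?_ (hb.nonneg _ _)
  generalize u p.1 - u p.2 = s
  generalize v p.1 - v p.2 = t
  rw [abs_le]
  constructor <;> nlinarith [sq_nonneg (s + t), sq_nonneg (s - t), sq_nonneg s, sq_nonneg t]

lemma memL2_sub {m f v : X → ℝ} (hm : ∀ x, 0 < m x) (hf : MemL2 m f) (hv : MemL2 m v) :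
    MemL2 m (fun x => f x - v x) := by
  have := (Summable.add hf hv).sub ((summable_mul hm hf hv).mul_left 2)
  refine this.congr (fun x => ?_)
  ring

lemma finEnergy_sub {b : X → X → ℝ} (hb : IsGraph b) {u v : X → ℝ} (hu : FinEnergy b u)
    (hv : FinEnergy b v) : FinEnergy b (fun x => u x - v x) := by
  have := (Summable.add hu hv).sub ((summable_bil hb hu hv).mul_left 2)
  refine this.congr (fun x => ?_)
  ring

/-- A proper weight that is still square integrable. -/
lemma exists_weight {m : X → ℝ} (hm : FinMeasure m) :
    ∃ N : X → ℝ, (∀ x, 0 ≤ N x) ∧ MemL2 m N ∧ ∀ M : ℝ, {x | N x ≤ M}.Finite := by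
  classical
  have h1 : ∀ j : ℕ, ∃ F : Finset X, ∑' x : {x // x ∉ F}, m x < (1 / 2) ^ j := fun j =>
    ((tendsto_tsum_compl_atTop_zero m).eventually
      (gt_mem_nhds (show (0 : ℝ) < (1 / 2) ^ j by positivity))).exists
  choose F hF using h1
  let g : ℕ × X → ℝ := fun p => Set.indicator {x | x ∉ F p.1} m p.2
  have hg0 : 0 ≤ g := fun p => Set.indicator_nonneg (fun x _ => (hm.pos x).le) _
  have hg : Summable g := by
    rw [summable_prod_of_nonneg hg0]
    refine ⟨fun j => hm.summable.indicator _, ?_⟩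
    refine Summable.of_nonneg_of_le (fun j => tsum_nonneg fun x => hg0 (j, x)) (fun j => ?_)
      (summable_geometric_of_lt_one (r := (1 / 2 : ℝ)) (by norm_num) (by norm_num))
    have := tsum_subtype {x | x ∉ F j} m
    exact (this.symm.trans_lt (hF j)).le
  have hg' : Summable (fun p : X × ℕ => g p.swap) := (Equiv.prodComm X ℕ).summable_iff.mpr hg
  rw [summable_prod_of_nonneg (fun p => hg0 p.swap)] at hg'
  obtain ⟨hg1, hg2⟩ := hg'
  have hG0 : ∀ x, 0 ≤ ∑' j, g (j, x) := fun x => tsum_nonneg fun j => hg0 (j, x)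
  refine ⟨fun x => Real.sqrt ((∑' j, g (j, x)) / m x), fun x => Real.sqrt_nonneg _, ?_, ?_⟩
  · refine hg2.congr fun x => ?_
    rw [Real.sq_sqrt (div_nonneg (hG0 x) (hm.pos x).le), div_mul_cancel₀ _ (hm.pos x).ne']
    rfl
  · intro M
    obtain ⟨J, hJ⟩ := exists_nat_gt (M ^ 2)
    refine ((Finset.range J).biUnion F).finite_toSet.subset fun x hx => ?_
    by_contra hcon
    have hnot : ∀ j ∈ Finset.range J, x ∉ F j := by
      intro j hj hxj
      exact hcon (by simpa using ⟨j, by simpa using hj, hxj⟩)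
    have hsum : ∑ j ∈ Finset.range J, g (j, x) ≤ ∑' j, g (j, x) :=
      (hg1 x).sum_le_tsum _ (fun j _ => hg0 (j, x))
    have heq : ∑ j ∈ Finset.range J, g (j, x) = J * m x := by
      rw [Finset.sum_congr rfl (fun j hj => Set.indicator_of_mem (show x ∈ {x | x ∉ F j} from hnot j hj) m)]
      simp
    have h2 : (J : ℝ) ≤ (∑' j, g (j, x)) / m x := by
      rw [le_div_iff₀ (hm.pos x)]; linarith
    have h3 : Real.sqrt ((∑' j, g (j, x)) / m x) ≤ M := hx
    have h4 := (Real.sqrt_le_left (le_trans (Real.sqrt_nonneg _) h3)).mp h3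
    linarith

/-- Every function of finite energy is bounded. -/
lemma bdd_of_finEnergy {b : X → X → ℝ} {m : X → ℝ} (hb : IsGraph b) (hm : FinMeasure m)
    (hcc : CanCompact b m) {u : X → ℝ} (hu : FinEnergy b u) : ∃ M : ℝ, ∀ x, |u x| ≤ M := by
  rcases isEmpty_or_nonempty X with hX | hX
  · exact ⟨0, fun x => (hX.false x).elim⟩
  obtain ⟨N, hN0, hN2, hNfin⟩ := exists_weight hm
  let v : X → ℝ := fun x => ⨅ y, (N y + |u x - u y|)
  have hbdd : ∀ x, BddBelow (Set.range fun y => N y + |u x - u y|) := fun x =>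
    ⟨0, by rintro _ ⟨y, rfl⟩; exact add_nonneg (hN0 y) (abs_nonneg _)⟩
  have hv0 : ∀ x, 0 ≤ v x := fun x => le_ciInf fun y => add_nonneg (hN0 y) (abs_nonneg _)
  have hvN : ∀ x, v x ≤ N x := fun x => (ciInf_le (hbdd x) x).trans (by simp)
  have hlip1 : ∀ x z, v x ≤ v z + |u x - u z| := by
    intro x z
    rw [← sub_le_iff_le_add]
    refine le_ciInf fun y => ?_
    have h1 : v x ≤ N y + |u x - u y| := ciInf_le (hbdd x) y
    have h2 := abs_sub_le (u x) (u z) (u y)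
    linarith
  have hlip : ∀ x z, |v x - v z| ≤ |u x - u z| := by
    intro x z
    rw [abs_le]
    have h1 := hlip1 x z
    have h2 := hlip1 z x
    rw [abs_sub_comm (u z)] at h2
    constructor <;> linarith
  have hvE := finEnergy_of_lip hb hu hlip
  have hv2 : MemL2 m v := by
    refine Summable.of_nonneg_of_le (fun x => mul_nonneg (sq_nonneg _) (hm.pos x).le) (fun x => ?_) hN2
    exact mul_le_mul_of_nonneg_right (pow_le_pow_left₀ (hv0 x) (hvN x) 2) (hm.pos x).le
  obtain ⟨M, hM⟩ := hcc v ⟨hv2, hvE⟩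
  have hfin := hNfin (M + 1)
  obtain ⟨C, hC⟩ := (hfin.image fun y => |u y|).bddAbove
  refine ⟨C + (M + 1), fun x => ?_⟩
  have hx : v x < M + 1 := lt_of_le_of_lt ((le_abs_self _).trans (hM x)) (by linarith)
  obtain ⟨y, hy⟩ := exists_lt_of_ciInf_lt hx
  have h1 : |u y| ≤ C := hC ⟨y, show N y ≤ M + 1 by linarith [abs_nonneg (u x - u y)], rfl⟩
  have h2 := abs_sub_abs_le_abs_sub (u x) (u y)
  linarith [hN0 y]

/-- The Hilbert space of functions of finite energy, realized inside an `ℓ²` space. -/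
def hilb (b : X → X → ℝ) (s : X → ℝ) : Submodule ℝ (lp (fun _ : (X × X) ⊕ X => ℝ) 2) where
  carrier := {w | ∀ p : X × X, w (Sum.inl p) =
    Real.sqrt (b p.1 p.2 / 2) * (w (Sum.inr p.1) / s p.1 - w (Sum.inr p.2) / s p.2)}
  add_mem' := by
    intro v w hv hw p
    simp only [lp.coeFn_add, Pi.add_apply]
    rw [hv p, hw p]; ring
  zero_mem' := by
    intro p; simp
  smul_mem' := by
    intro c w hw p
    simp only [lp.coeFn_smul, Pi.smul_apply, smul_eq_mul]
    rw [hw p]; ring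

lemma isClosed_hilb (b : X → X → ℝ) (s : X → ℝ) :
    IsClosed (hilb b s : Set (lp (fun _ : (X × X) ⊕ X => ℝ) 2)) := by
  have hc : ∀ i : (X × X) ⊕ X,
      Continuous (fun w : lp (fun _ : (X × X) ⊕ X => ℝ) 2 => w i) := fun i =>
    (lp.evalCLM ℝ (fun _ : (X × X) ⊕ X => ℝ) 2 i).continuous
  have : (hilb b s : Set (lp (fun _ : (X × X) ⊕ X => ℝ) 2)) = ⋂ p : X × X, {w | w (Sum.inl p) =
    Real.sqrt (b p.1 p.2 / 2) * (w (Sum.inr p.1) / s p.1 - w (Sum.inr p.2) / s p.2)} := by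
    ext w
    simp only [Set.mem_iInter]
    rfl
  rw [this]
  refine isClosed_iInter fun p => isClosed_eq (hc _) ?_
  exact continuous_const.mul (((hc _).div_const _).sub ((hc _).div_const _))

lemma summable_sq_lp {ι : Type*} (w : lp (fun _ : ι => ℝ) 2) : Summable (fun i => w i ^ 2) := by
  refine (lp.summable_inner (𝕜 := ℝ) w w).congr fun i => ?_
  simp [sq]

lemma hilb_finEnergy {b : X → X → ℝ} (hb : IsGraph b) {s : X → ℝ} (w : hilb b s) :
    FinEnergy b (fun x => w.1 (Sum.inr x) / s x) := by
  have h := ((summable_sq_lp w.1).comp_injective Sum.inl_injective).mul_left 2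
  refine h.congr fun p => ?_
  simp only [Function.comp]
  rw [w.2 p, mul_pow, Real.sq_sqrt (div_nonneg (hb.nonneg _ _) (by norm_num))]
  ring

lemma exists_hilb {b : X → X → ℝ} (hb : IsGraph b) {s : X → ℝ} (hs : ∀ x, 0 < s x) {v : X → ℝ}
    (hv : FinEnergy b v) (hv2 : Summable fun x => (s x * v x) ^ 2) :
    ∃ w : hilb b s, ∀ x, w.1 (Sum.inr x) = s x * v x := by
  let w : (X × X) ⊕ X → ℝ := Sum.elim
    (fun p => Real.sqrt (b p.1 p.2 / 2) * (v p.1 - v p.2)) (fun x => s x * v x)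
  have hw : Memℓp w 2 := by
    apply memℓp_gen
    have : Summable (fun i => w i ^ 2) := by
      refine Summable.sum _ ?_ hv2
      refine (Summable.mul_left (1 / 2) hv).congr fun p => ?_
      simp only [Function.comp, w, Sum.elim_inl]
      rw [mul_pow, Real.sq_sqrt (div_nonneg (hb.nonneg _ _) (by norm_num))]
      ring
    refine this.congr fun i => ?_
    simp
  refine ⟨⟨⟨w, hw⟩, fun p => ?_⟩, fun x => rfl⟩
  change Real.sqrt (b p.1 p.2 / 2) * (v p.1 - v p.2) = Real.sqrt (b p.1 p.2 / 2) *
    (s p.1 * v p.1 / s p.1 - s p.2 * v p.2 / s p.2)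
  rw [mul_div_cancel_left₀ _ (hs _).ne', mul_div_cancel_left₀ _ (hs _).ne']

lemma inner_hilb {b : X → X → ℝ} (hb : IsGraph b) {s : X → ℝ} (hs : ∀ x, 0 < s x)
    (w z : hilb b s) :
    inner ℝ w z = energyBil b (fun x => w.1 (Sum.inr x) / s x) (fun x => z.1 (Sum.inr x) / s x) +
      ∑' x, s x ^ 2 * (w.1 (Sum.inr x) / s x) * (z.1 (Sum.inr x) / s x) := by
  have h0 : Summable (fun i => w.1 i * z.1 i) := by
    refine (lp.summable_inner (𝕜 := ℝ) w.1 z.1).congr fun i => ?_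
    simp [mul_comm]
  have h1 : inner ℝ w z = ∑' i, w.1 i * z.1 i := by
    rw [Submodule.coe_inner, lp.inner_eq_tsum]
    refine tsum_congr fun i => ?_
    simp [mul_comm]
  have h2 := (h0.comp_injective Sum.inl_injective).hasSum.sum
    (h0.comp_injective Sum.inr_injective).hasSum
  rw [h1, h2.tsum_eq, energyBil, ← tsum_mul_left]
  congr 1
  · refine tsum_congr fun p => ?_
    simp only [Function.comp]
    rw [w.2 p, z.2 p]
    have := Real.mul_self_sqrt (div_nonneg (hb.nonneg p.1 p.2) (by norm_num : (0:ℝ) ≤ 2))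
    linear_combination (w.1 (Sum.inr p.1) / s p.1 - w.1 (Sum.inr p.2) / s p.2) *
      (z.1 (Sum.inr p.1) / s p.1 - z.1 (Sum.inr p.2) / s p.2) * this
  · refine tsum_congr fun x => ?_
    have := (hs x).ne'
    simp only [Function.comp]
    field_simp

end Stmt11Aux

open Stmt11Aux in
/-- for `k ∈ ℓ²(X,m)` with `k > 0`, the operator `L + k` with
domain `D(L)` is a bijection onto `ℓ²(X,m)`: for each `f ∈ ℓ²(X,m)` there is a
unique `u ∈ D(L)` with `Lu + k·u = f`, i.e. `Lu = f - k·u`. -/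
theorem stmt11 {X : Type*} [Countable X] (b : X → X → ℝ) (m : X → ℝ)
    (hb : IsGraph b) (hconn : GraphConnected b) (hm : FinMeasure m)
    (hcc : CanCompact b m) (k : X → ℝ) (hk2 : MemL2 m k) (hkpos : ∀ x, 0 < k x) :
    ∀ f : X → ℝ, MemL2 m f →
      ∃! u : X → ℝ, IsLap b m u (fun x => f x - k x * u x) := by
  intro f hf
  have hL2 : ∀ {u : X → ℝ}, FinEnergy b u → MemL2 m u := by
    intro u hu
    obtain ⟨M, hM⟩ := bdd_of_finEnergy hb hm hcc hu
    simpa using memL2_of_bdd hm.pos (memL2_one hm) hM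
  have hkL2 : ∀ {u : X → ℝ}, FinEnergy b u → MemL2 m (fun x => k x * u x) := by
    intro u hu
    obtain ⟨M, hM⟩ := bdd_of_finEnergy hb hm hcc hu
    exact memL2_of_bdd hm.pos hk2 hM
  let s : X → ℝ := fun x => Real.sqrt (k x * m x)
  have hs : ∀ x, 0 < s x := fun x => Real.sqrt_pos.mpr (mul_pos (hkpos x) (hm.pos x))
  have hs2 : ∀ x, s x ^ 2 = k x * m x := fun x =>
    Real.sq_sqrt (mul_pos (hkpos x) (hm.pos x)).le
  refine existsUnique_of_exists_of_unique ?_ ?_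
  · haveI : CompleteSpace (hilb b s) := (isClosed_hilb b s).completeSpace_coe
    let g : Finset X → (hilb b s →L[ℝ] ℝ) := fun F => ∑ x ∈ F,
      (f x * m x / s x) • ((lp.evalCLM ℝ (fun _ : (X × X) ⊕ X => ℝ) 2 (Sum.inr x)).comp
        (hilb b s).subtypeL)
    have hg : ∀ F w, g F w = ∑ x ∈ F, f x * (w.1 (Sum.inr x) / s x) * m x := by
      intro F w
      simp only [g, ContinuousLinearMap.sum_apply]
      refine Finset.sum_congr rfl fun x _ => ?_
      change f x * m x / s x * w.1 (Sum.inr x) = _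
      ring
    have hlim : Tendsto (fun F w => g F w) atTop
        (𝓝 fun w : hilb b s => ∑' x, f x * (w.1 (Sum.inr x) / s x) * m x) := by
      rw [tendsto_pi_nhds]
      intro w
      simp only [hg]
      exact (summable_mul hm.pos hf (hL2 (hilb_finEnergy hb w))).hasSum
    let Λ := continuousLinearMapOfTendsto g hlim
    have hΛ : ∀ w : hilb b s, Λ w = ∑' x, f x * (w.1 (Sum.inr x) / s x) * m x := fun w => rfl
    let w := (InnerProductSpace.toDual ℝ (hilb b s)).symm Λ
    have hw : ∀ z, inner ℝ w z = Λ z := fun z => InnerProductSpace.toDual_symm_apply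
    have huE := hilb_finEnergy hb w
    refine ⟨fun x => w.1 (Sum.inr x) / s x, ⟨hL2 huE, huE⟩, memL2_sub hm.pos hf (hkL2 huE), ?_⟩
    rintro v ⟨hv2, hvE⟩
    obtain ⟨z, hz⟩ := exists_hilb hb hs hvE (by
      refine (summable_mul hm.pos (hkL2 hvE) hv2).congr fun x => ?_
      rw [mul_pow, hs2]; ring)
    have hzv : ∀ x, z.1 (Sum.inr x) / s x = v x := fun x => by
      rw [hz, mul_div_cancel_left₀ _ (hs x).ne']
    have key := hw z
    rw [hΛ, inner_hilb hb hs] at key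
    simp only [hzv, hs2] at key
    rw [← eq_sub_iff_add_eq, ← (summable_mul hm.pos hf hv2).tsum_sub] at key
    · rw [key]
      refine tsum_congr fun x => ?_
      ring
    · refine (summable_mul hm.pos (hkL2 huE) hv2).congr fun x => ?_
      ring
  · rintro u₁ u₂ ⟨⟨h12, h1E⟩, h1f, h1⟩ ⟨⟨h22, h2E⟩, h2f, h2⟩
    have hdE := finEnergy_sub hb h1E h2E
    have hd2 := hL2 hdE
    have e1 := h1 _ ⟨hd2, hdE⟩
    have e2 := h2 _ ⟨hd2, hdE⟩
    have e3 : energyBil b u₁ (fun x => u₁ x - u₂ x) - energyBil b u₂ (fun x => u₁ x - u₂ x)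
        = energy b (fun x => u₁ x - u₂ x) := by
      rw [energyBil, energyBil, energy, ← mul_sub,
        ← (summable_bil hb h1E hdE).tsum_sub (summable_bil hb h2E hdE)]
      congr 1
      refine tsum_congr fun p => ?_
      ring
    have hks := summable_mul hm.pos (hkL2 hdE) hd2
    have e4 : (∑' x, (f x - k x * u₁ x) * (u₁ x - u₂ x) * m x)
        - (∑' x, (f x - k x * u₂ x) * (u₁ x - u₂ x) * m x)
        = - ∑' x, k x * (u₁ x - u₂ x) * (u₁ x - u₂ x) * m x := by
      rw [← (summable_mul hm.pos h1f hd2).tsum_sub (summable_mul hm.pos h2f hd2), ← tsum_neg]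
      refine tsum_congr fun x => ?_
      ring
    have e5 : 0 ≤ energy b (fun x => u₁ x - u₂ x) :=
      mul_nonneg (by norm_num) (tsum_nonneg fun p => mul_nonneg (hb.nonneg _ _) (sq_nonneg _))
    have hnn : ∀ x, 0 ≤ k x * (u₁ x - u₂ x) * (u₁ x - u₂ x) * m x := fun x => by
      rw [mul_assoc (k x)]
      exact mul_nonneg (mul_nonneg (hkpos x).le (mul_self_nonneg _)) (hm.pos x).le
    funext x
    have e6 := hks.le_tsum x (fun y _ => hnn y)
    have e7 : k x * (u₁ x - u₂ x) * (u₁ x - u₂ x) * m x = 0 :=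
      le_antisymm (by linarith) (hnn x)
    have := (hkpos x).ne'
    have := (hm.pos x).ne'
    simp_all [sub_eq_zero]
end
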